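/- Let 𝒮 ⊂ ℝ³ be a C² compact closed connected embedded surface homeomorphic to the 2-sphere, bounding the region 𝒮₋ with exterior 𝒮₊, and let (v₋, v₊) satisfy the CVS conditions (1)–(5). Then v₋ vanishes identically on 𝒮₋ and v₊ vanishes identically on 𝒮₊. -/

import Mathlib

noncomputable section

open MeasureTheory Filter Set
open scoped RealInnerProductSpace Topology

abbrev E3 : Type := EuclideanSpace ℝ (Fin 3)
abbrev E2 : Type := EuclideanSpace ℝ (Fin 2)

def mk3 (a b c : ℝ) : E3 := (EuclideanSpace.equiv (Fin 3) ℝ).symm ![a, b, c]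

def e3 (i : Fin 3) : E3 := EuclideanSpace.single i 1

/-- `∂_j v_i` at `p`. -/
def pder (v : E3 → E3) (i j : Fin 3) (p : E3) : ℝ := fderiv ℝ v p (e3 j) i

def div3 (v : E3 → E3) (p : E3) : ℝ := ∑ i, pder v i i p

def curl3 (v : E3 → E3) (p : E3) : E3 :=
  mk3 (pder v 2 1 p - pder v 1 2 p) (pder v 0 2 p - pder v 2 0 p)
    (pder v 1 0 p - pder v 0 1 p)

def lap3 (f : E3 → ℝ) (p : E3) : ℝ :=
  ∑ j, fderiv ℝ (fun x => fderiv ℝ f x (e3 j)) p (e3 j)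

def IsTangentAt (S : Set E3) (p v : E3) : Prop :=
  ∃ γ : ℝ → E3, (∀ t, γ t ∈ S) ∧ γ 0 = p ∧ HasDerivAt γ v 0

def IsSurface (k : ℕ∞) (S : Set E3) : Prop :=
  ∀ p ∈ S, ∃ (f : E2 → E3) (U : Set E2) (V : Set E3),
    IsOpen U ∧ IsOpen V ∧ p ∈ V ∧ ContDiffOn ℝ k f U ∧ Set.InjOn f U ∧
    f '' U = S ∩ V ∧ ∀ x ∈ U, Function.Injective (fderiv ℝ f x)

structure CVSBase (S Ωm Ωp : Set E3) (vm vp : E3 → E3) : Prop where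
  openm : IsOpen Ωm
  openp : IsOpen Ωp
  disj : Disjoint Ωm Ωp
  disjm : Disjoint Ωm S
  disjp : Disjoint Ωp S
  clm : S ⊆ closure Ωm
  clp : S ⊆ closure Ωp
  smoothm : ∃ W, IsOpen W ∧ Ωm ∪ S ⊆ W ∧ ContDiffOn ℝ 1 vm W
  smoothp : ∃ W, IsOpen W ∧ Ωp ∪ S ⊆ W ∧ ContDiffOn ℝ 1 vp W
  divm : ∀ p ∈ Ωm, div3 vm p = 0
  divp : ∀ p ∈ Ωp, div3 vp p = 0
  curlm : ∀ p ∈ Ωm, curl3 vm p = 0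
  curlp : ∀ p ∈ Ωp, curl3 vp p = 0
  tangentm : ∀ p ∈ S, IsTangentAt S p (vm p)
  tangentp : ∀ p ∈ S, IsTangentAt S p (vp p)

structure CVSPair (S Ωm Ωp : Set E3) (vm vp : E3 → E3)
    extends CVSBase S Ωm Ωp vm vp : Prop where
  strain : ∀ p ∈ S, (fderiv ℝ vp p + fderiv ℝ vm p) (vp p - vm p) = 0
  bernoulli : ∀ p ∈ S, ∀ᶠ q in 𝓝[S] p,
    ‖vp q‖ ^ 2 - ‖vm q‖ ^ 2 = ‖vp p‖ ^ 2 - ‖vm p‖ ^ 2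

/-- the open region `Ωm` is the bounded region enclosed by the closed surface `S`,
and `Ωp` is its exterior. -/
structure EnclosedBy (S Ωm Ωp : Set E3) : Prop where
  openm : IsOpen Ωm
  bounded : Bornology.IsBounded Ωm
  fr : frontier Ωm = S
  plus : Ωp = (Ωm ∪ S)ᶜ

/-!
Interior. On a topological sphere every locally constant cocycle is trivial, so the tangential
part of `vm` along `S` is the differential of a function on `S`. An infimum of paraboloids extends
this function to a Lipschitz `F` on space with `∇F - vm` of the order of the distance to `S`.
Hence `vm - ∇F`, extended by zero outside `Ωm`, is weakly irrotational on all of `ℝ³`, so it is a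
limit of gradients, to which the solenoidal tangential field `vm` is orthogonal. Since `vm` is
orthogonal to `∇F` as well, `∫ |vm|² = 0`.

Exterior. Once `vm = 0`, the strain condition says `Dvp vp = 0` on `S`. At an extremum `p` of
`x ↦ ⟪vp x, x⟫` on `S`, differentiating in the tangential direction `vp p` gives `|vp p|² = 0`, so
the extremal values are `0`; thus the function vanishes, every point is extremal, and `vp = 0` on
`S`. Its Jacobian on `S` is then symmetric, trace-free and of rank at most one, hence zero, so
`vp` extended by zero is a `C¹` irrotational solenoidal field on `ℝ³` that vanishes on an open
set. Such a field is zero: all moments of its potential, cut off radially about a point of that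
set, vanish, and moments determine a function of compact support.
-/

/-! ### Invariance of domain in the plane -/

section InvarianceOfDomain

/-- A nowhere vanishing map to `ℂ` that has a continuous logarithm: for maps from the circle, an
encoding of winding number zero. -/
def HasContinuousLog {X : Type*} [TopologicalSpace X] (φ : X → ℂ) : Prop :=
  ∃ L : X → ℂ, Continuous L ∧ ∀ x, Complex.exp (L x) = φ x

variable {X : Type*} [TopologicalSpace X]

lemma hasContinuousLog_const {z : ℂ} (hz : z ≠ 0) : HasContinuousLog fun _ : X => z :=
  ⟨fun _ => Complex.log z, continuous_const, fun _ => Complex.exp_log hz⟩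

lemma HasContinuousLog.of_homotopy {φ ψ : X → ℂ} (hφ : HasContinuousLog φ)
    {H : unitInterval × X → ℂ} (hH : Continuous H) (hH_ne : ∀ p, H p ≠ 0)
    (h_zero : ∀ x, H (0, x) = φ x) (h_one : ∀ x, H (1, x) = ψ x) : HasContinuousLog ψ := by
  obtain ⟨L, hL, hLφ⟩ := hφ
  let K : C(unitInterval × X, {z : ℂ // z ≠ 0}) := ⟨fun p => ⟨H p, hH_ne p⟩, by fun_prop⟩
  have hK : ∀ x, K (0, x) = (⟨Complex.exp (L x), Complex.exp_ne_zero _⟩ : {z : ℂ // z ≠ 0}) :=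
    fun x => Subtype.ext ((h_zero x).trans (hLφ x).symm)
  let G := Complex.isCoveringMap_exp.liftHomotopy K ⟨L, hL⟩ hK
  refine ⟨fun x => G (1, x), by fun_prop, fun x => ?_⟩
  have hlift := congrFun (Complex.isCoveringMap_exp.liftHomotopy_lifts K ⟨L, hL⟩ hK) (1, x)
  exact (congrArg Subtype.val hlift).trans (h_one x)

lemma HasContinuousLog.of_norm_sub_lt {φ ψ : X → ℂ} (hφ : HasContinuousLog φ)
    (hφc : Continuous φ) (hψc : Continuous ψ) (h : ∀ x, ‖ψ x - φ x‖ < ‖ψ x‖) :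
    HasContinuousLog ψ := by
  refine hφ.of_homotopy (H := fun p => ψ p.2 - (1 - ((p.1 : ℝ) : ℂ)) * (ψ p.2 - φ p.2))
    (by fun_prop) (fun p hp => ?_) (fun x => by simp) (fun x => by simp)
  have hle : ‖(1 - ((p.1 : ℝ) : ℂ))‖ ≤ 1 := by
    rw [← Complex.ofReal_one, ← Complex.ofReal_sub, Complex.norm_real, Real.norm_eq_abs,
      abs_of_nonneg (by linarith [p.1.2.2])]
    linarith [p.1.2.1]
  have heq : ‖ψ p.2‖ = ‖(1 - ((p.1 : ℝ) : ℂ))‖ * ‖ψ p.2 - φ p.2‖ := by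
    rw [← norm_mul, ← sub_eq_zero.1 hp]
  nlinarith [h p.2, norm_nonneg (ψ p.2 - φ p.2)]

lemma not_hasContinuousLog_of_odd [PreconnectedSpace X] [Nonempty X] {σ : X → X}
    (hσ : Continuous σ) (hσσ : Function.Involutive σ) {φ : X → ℂ} (hodd : ∀ x, φ (σ x) = -φ x) :
    ¬ HasContinuousLog φ := by
  rintro ⟨L, hL, hLφ⟩
  have hexp : ∀ x, Complex.exp (L (σ x) - L x) = -1 := fun x => by
    rw [Complex.exp_sub, hLφ, hodd, ← hLφ x, neg_div, div_self (Complex.exp_ne_zero _)]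
  have hcont : Continuous fun x => (L (σ x) - L x).im :=
    Complex.continuous_im.comp ((hL.comp hσ).sub hL)
  obtain ⟨a⟩ := ‹Nonempty X›
  have hflip : (L (σ (σ a)) - L (σ a)).im = -(L (σ a) - L a).im := by rw [hσσ a]; simp
  obtain ⟨x, hx⟩ : ∃ x, (L (σ x) - L x).im = 0 := by
    rcases le_total (L (σ a) - L a).im 0 with ha | ha
    · exact mem_range_of_exists_le_of_exists_ge hcont ⟨a, ha⟩ ⟨σ a, by linarith⟩
    · exact mem_range_of_exists_le_of_exists_ge hcont ⟨σ a, by linarith⟩ ⟨a, ha⟩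
  have hre := congrArg Complex.re (hexp x)
  rw [Complex.exp_re, hx, Real.cos_zero, mul_one, Complex.neg_re, Complex.one_re] at hre
  linarith [Real.exp_pos (L (σ x) - L x).re]

lemma ofReal_mul_circle_mem_closedBall {t : ℝ} (ht : |t| ≤ 1) (x : Circle) :
    (t : ℂ) * x ∈ Metric.closedBall (0 : ℂ) 1 := by
  rwa [mem_closedBall_zero_iff, norm_mul, Circle.norm_coe, mul_one, Complex.norm_real]

lemma circle_mem_closedBall (x : Circle) : (x : ℂ) ∈ Metric.closedBall (0 : ℂ) 1 := by
  rw [mem_closedBall_zero_iff, Circle.norm_coe]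

lemma hasContinuousLog_circle_sub_of_notMem_image {f : ℂ → ℂ}
    (hf : ContinuousOn f (Metric.closedBall 0 1)) {q : ℂ}
    (hq : q ∉ f '' Metric.closedBall 0 1) : HasContinuousLog fun x : Circle => f x - q := by
  have hmem : ∀ p : unitInterval × Circle, ((p.1 : ℝ) : ℂ) * p.2 ∈ Metric.closedBall (0 : ℂ) 1 :=
    fun p => ofReal_mul_circle_mem_closedBall (by rw [abs_of_nonneg p.1.2.1]; exact p.1.2.2) _
  have hne : ∀ z ∈ Metric.closedBall (0 : ℂ) 1, f z - q ≠ 0 := fun z hz h =>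
    hq ⟨z, hz, sub_eq_zero.1 h⟩
  exact (hasContinuousLog_const (hne 0 (by simp))).of_homotopy
    (H := fun p => f (((p.1 : ℝ) : ℂ) * p.2) - q)
    ((hf.comp_continuous (by fun_prop) hmem).sub continuous_const)
    (fun p => hne _ (hmem p)) (fun x => by simp) (fun x => by simp)

/- The homotopy `f (x / (1 + t)) - f (-t x / (1 + t))` joins `f x - f 0` to the odd map
`f (x / 2) - f (-x / 2)`, and injectivity of `f` keeps it away from zero. -/
lemma not_hasContinuousLog_circle_sub_center {f : ℂ → ℂ}
    (hf : ContinuousOn f (Metric.closedBall 0 1)) (hinj : InjOn f (Metric.closedBall 0 1)) :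
    ¬ HasContinuousLog fun x : Circle => f x - f 0 := by
  intro hlog
  have hpos : ∀ t : unitInterval, 0 < 1 + (t : ℝ) := fun t => by linarith [t.2.1]
  have houter : ∀ p : unitInterval × Circle,
      ((1 / (1 + (p.1 : ℝ)) : ℝ) : ℂ) * p.2 ∈ Metric.closedBall (0 : ℂ) 1 := fun p =>
    ofReal_mul_circle_mem_closedBall (by
      rw [abs_of_pos (one_div_pos.2 (hpos p.1)), div_le_one (hpos p.1)]; linarith [p.1.2.1]) _
  have hinner : ∀ p : unitInterval × Circle,
      ((-(p.1 : ℝ) / (1 + (p.1 : ℝ)) : ℝ) : ℂ) * p.2 ∈ Metric.closedBall (0 : ℂ) 1 := fun p =>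
    ofReal_mul_circle_mem_closedBall (by
      rw [neg_div, abs_neg, abs_of_nonneg (div_nonneg p.1.2.1 (hpos p.1).le),
        div_le_one (hpos p.1)]
      linarith) _
  refine not_hasContinuousLog_of_odd (continuous_neg (G := Circle)) neg_involutive
    (φ := fun x => f (((1 / 2 : ℝ) : ℂ) * x) - f (((-1 / 2 : ℝ) : ℂ) * x)) (fun x => ?_)
    (hlog.of_homotopy (H := fun p => f (((1 / (1 + (p.1 : ℝ)) : ℝ) : ℂ) * p.2)
      - f (((-(p.1 : ℝ) / (1 + (p.1 : ℝ)) : ℝ) : ℂ) * p.2)) ?_ (fun p hp => ?_)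
      (fun x => by simp) (fun x => by norm_num))
  · have hcoe : ((-x : Circle) : ℂ) = -x := rfl
    rw [hcoe, neg_sub]; congr 2 <;> push_cast <;> ring
  · have hden : ∀ p : unitInterval × Circle, 1 + (p.1 : ℝ) ≠ 0 := fun p => (hpos p.1).ne'
    refine (hf.comp_continuous (.mul (Complex.continuous_ofReal.comp ?_) (by fun_prop)) houter).sub
      (hf.comp_continuous (.mul (Complex.continuous_ofReal.comp ?_) (by fun_prop)) hinner)
    all_goals exact Continuous.div (by fun_prop) (by fun_prop) hden
  · have hcoef := mul_right_cancel₀ (Circle.coe_ne_zero p.2)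
      (hinj (houter p) (hinner p) (sub_eq_zero.1 hp))
    rw [Complex.ofReal_inj, div_left_inj' (hpos p.1).ne'] at hcoef
    linarith [p.1.2.1]

theorem image_closedBall_mem_nhds_of_injOn {f : ℂ → ℂ}
    (hf : ContinuousOn f (Metric.closedBall 0 1)) (hinj : InjOn f (Metric.closedBall 0 1)) :
    f '' Metric.closedBall 0 1 ∈ 𝓝 (f 0) := by
  have hfc : Continuous fun x : Circle => f x :=
    hf.comp_continuous (by fun_prop) circle_mem_closedBall
  obtain ⟨x₀, -, hx₀⟩ := isCompact_univ.exists_isMinOn (univ_nonempty (α := Circle))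
    (hfc.sub continuous_const).norm.continuousOn (f := fun x : Circle => ‖f x - f 0‖)
  have hpos : 0 < ‖f x₀ - f 0‖ := by
    rw [norm_pos_iff, sub_ne_zero]
    exact fun h => Circle.coe_ne_zero x₀ (hinj (circle_mem_closedBall x₀) (by simp) h)
  filter_upwards [Metric.ball_mem_nhds (f 0) hpos] with q hq
  by_contra hq_image
  refine not_hasContinuousLog_circle_sub_center hf hinj
    ((hasContinuousLog_circle_sub_of_notMem_image hf hq_image).of_norm_sub_lt
      (hfc.sub continuous_const) (hfc.sub continuous_const) fun x => ?_)
  calc ‖f x - f 0 - (f x - q)‖ = dist q (f 0) := by rw [dist_eq_norm]; congr 1; ring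
    _ < ‖f x₀ - f 0‖ := hq
    _ ≤ ‖f x - f 0‖ := hx₀ (mem_univ x)

end InvarianceOfDomain

/-! ### Locally constant cocycles on the sphere -/

section LocalPrimitives

/-- A locally constant cocycle: local primitives `fn i` on the open sets `domain i`, any two of
which differ by a locally constant function. The values of `fn i` off `domain i` carry no
information. -/
structure PrimitiveAtlas (ι X : Type*) [TopologicalSpace X] where
  domain : ι → Set X
  isOpen_domain : ∀ i, IsOpen (domain i)
  exists_mem_domain : ∀ x, ∃ i, x ∈ domain i
  fn : ι → X → ℝ
  eventually_sub_eq : ∀ i j, ∀ x ∈ domain i ∩ domain j,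
    ∀ᶠ y in 𝓝 x, fn i y - fn j y = fn i x - fn j x

namespace PrimitiveAtlas

variable {ι X Y : Type*} [TopologicalSpace X] [TopologicalSpace Y]

/-- `G` differs from every local primitive by a locally constant function near each point
of `U`. -/
def IsPrimitiveOn (A : PrimitiveAtlas ι X) (G : X → ℝ) (U : Set X) : Prop :=
  ∀ x ∈ U, ∀ i, x ∈ A.domain i → ∀ᶠ y in 𝓝 x, G y - A.fn i y = G x - A.fn i x

/-- The pullback of an atlas of local primitives along a continuous map. -/
def comap (A : PrimitiveAtlas ι X) {π : Y → X} (hπ : Continuous π) : PrimitiveAtlas ι Y where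
  domain i := π ⁻¹' A.domain i
  isOpen_domain i := (A.isOpen_domain i).preimage hπ
  exists_mem_domain y := A.exists_mem_domain (π y)
  fn i y := A.fn i (π y)
  eventually_sub_eq i j y hy := (hπ.tendsto y).eventually (A.eventually_sub_eq i j (π y) hy)

variable {A : PrimitiveAtlas ι X} {G G₁ G₂ : X → ℝ} {U V : Set X}

lemma IsPrimitiveOn.mono (hG : A.IsPrimitiveOn G V) (hUV : U ⊆ V) : A.IsPrimitiveOn G U :=
  fun x hx => hG x (hUV hx)

lemma isPrimitiveOn_fn (i : ι) : A.IsPrimitiveOn (A.fn i) (A.domain i) :=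
  fun x hx j hj => A.eventually_sub_eq i j x ⟨hx, hj⟩

lemma IsPrimitiveOn.congr_add_const (hG : A.IsPrimitiveOn G U) (hU : IsOpen U) {F : X → ℝ} {c : ℝ}
    (hF : ∀ x ∈ U, F x = G x + c) : A.IsPrimitiveOn F U := by
  intro x hx i hi
  filter_upwards [hU.mem_nhds hx, hG x hx i hi] with y hy hGy
  rw [hF x hx, hF y hy]
  linarith

lemma IsPrimitiveOn.sub_eq_sub (h₁ : A.IsPrimitiveOn G₁ U) (h₂ : A.IsPrimitiveOn G₂ U)
    (hU : IsPreconnected U) {x y : X} (hx : x ∈ U) (hy : y ∈ U) :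
    G₁ x - G₂ x = G₁ y - G₂ y := by
  have : PreconnectedSpace U := isPreconnected_iff_preconnectedSpace.1 hU
  have hconst : IsLocallyConstant fun z : U => G₁ z - G₂ z := by
    rw [IsLocallyConstant.iff_eventually_eq]
    intro z
    obtain ⟨i, hi⟩ := A.exists_mem_domain (z : X)
    filter_upwards [continuous_subtype_val.continuousAt.eventually (h₁ z z.2 i hi),
      continuous_subtype_val.continuousAt.eventually (h₂ z z.2 i hi)] with w hw₁ hw₂
    linarith
  exact hconst.apply_eq_of_preconnectedSpace ⟨x, hx⟩ ⟨y, hy⟩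

lemma IsPrimitiveOn.exists_union (h₁ : A.IsPrimitiveOn G₁ U) (h₂ : A.IsPrimitiveOn G₂ V)
    (hU : IsOpen U) (hV : IsOpen V) (hUV : IsPreconnected (U ∩ V)) :
    ∃ G, A.IsPrimitiveOn G (U ∪ V) := by
  classical
  obtain ⟨c, hc⟩ : ∃ c, ∀ x ∈ U ∩ V, G₁ x - G₂ x = c := by
    rcases (U ∩ V).eq_empty_or_nonempty with hempty | ⟨x₀, hx₀⟩
    · exact ⟨0, by simp [hempty]⟩
    · exact ⟨G₁ x₀ - G₂ x₀, fun x hx => (h₁.mono inter_subset_left).sub_eq_sub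
        (h₂.mono inter_subset_right) hUV hx hx₀⟩
  have hGU : A.IsPrimitiveOn (U.piecewise G₁ fun x => G₂ x + c) U :=
    h₁.congr_add_const hU (c := 0) fun x hx => by simp [hx]
  have hGV : A.IsPrimitiveOn (U.piecewise G₁ fun x => G₂ x + c) V :=
    h₂.congr_add_const hV fun x hx => by
      by_cases hxU : x ∈ U
      · simp only [piecewise_eq_of_mem, hxU]; linarith [hc x ⟨hxU, hx⟩]
      · simp [hxU]
  exact ⟨_, fun x hx => hx.elim (hGU x) (hGV x)⟩

lemma exists_isPrimitiveOn_iUnion {U : ℕ → Set X} (hU : ∀ n, IsOpen (U n)) (hmono : Monotone U)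
    (hconn : ∀ n, IsPreconnected (U n)) {x₀ : X} (hx₀ : ∀ n, x₀ ∈ U n)
    (h : ∀ n, ∃ G, A.IsPrimitiveOn G (U n)) : ∃ G, A.IsPrimitiveOn G (⋃ n, U n) := by
  choose G hG using h
  have hagree : ∀ m n, m ≤ n → ∀ x ∈ U m, G m x - G m x₀ = G n x - G n x₀ := fun m n hmn x hx => by
    linarith [(hG m).sub_eq_sub ((hG n).mono (hmono hmn)) (hconn m) hx (hx₀ m)]
  have hindex : ∀ x, ∃ m, ∀ n, x ∈ U n → x ∈ U m := fun x => by
    by_cases hx : ∃ n, x ∈ U n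
    · exact ⟨hx.choose, fun _ _ => hx.choose_spec⟩
    · exact ⟨0, fun n hn => (hx ⟨n, hn⟩).elim⟩
  choose m hm using hindex
  refine ⟨fun x => G (m x) x - G (m x) x₀, fun x hx => ?_⟩
  obtain ⟨n, hn⟩ := mem_iUnion.1 hx
  refine (hG n).congr_add_const (hU n) (c := -G n x₀) (fun z hz => ?_) x hn
  rcases le_total (m z) n with hle | hle
  · rw [hagree (m z) n hle z (hm z n hz)]; ring
  · rw [← hagree n (m z) hle z hz]; ring

lemma exists_isPrimitiveOn_of_slabs {E : Type*} [NormedAddCommGroup E] [NormedSpace ℝ E]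
    {A : PrimitiveAtlas ι E} {C : Set E} (hC : IsOpen C) (hconv : Convex ℝ C) (ℓ : E →L[ℝ] ℝ)
    {a b δ : ℝ} (hCℓ : C ⊆ ℓ ⁻¹' Ioo a b) (hδ : 0 < δ)
    (hslab : ∀ t, ∃ G, A.IsPrimitiveOn G (C ∩ ℓ ⁻¹' Ioo t (t + δ))) :
    ∃ G, A.IsPrimitiveOn G C := by
  have hopen : ∀ s t, IsOpen (C ∩ ℓ ⁻¹' Ioo s t) := fun s t =>
    hC.inter (isOpen_Ioo.preimage ℓ.continuous)
  have hstep : ∀ n : ℕ, ∃ G, A.IsPrimitiveOn G (C ∩ ℓ ⁻¹' Ioo a (a + δ * (1 + n / 2))) := by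
    intro n
    induction n with
    | zero => simpa using hslab a
    | succ n ih =>
      obtain ⟨G₁, hG₁⟩ := ih
      obtain ⟨G₂, hG₂⟩ := hslab (a + δ * ((n + 1) / 2))
      have hoverlap : IsPreconnected ((C ∩ ℓ ⁻¹' Ioo a (a + δ * (1 + n / 2))) ∩
          (C ∩ ℓ ⁻¹' Ioo (a + δ * ((n + 1) / 2)) (a + δ * ((n + 1) / 2) + δ))) :=
        ((hconv.inter ((convex_Ioo _ _).linear_preimage ℓ.toLinearMap)).inter
          (hconv.inter ((convex_Ioo _ _).linear_preimage ℓ.toLinearMap))).isPreconnected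
      obtain ⟨G, hG⟩ := hG₁.exists_union hG₂ (hopen _ _) (hopen _ _) hoverlap
      refine ⟨G, hG.mono fun x hx => ?_⟩
      obtain ⟨hxC, hxa, hxb⟩ := hx
      push_cast at hxb
      rcases lt_or_ge (ℓ x) (a + δ * (1 + n / 2)) with hlt | hge
      · exact Or.inl ⟨hxC, hxa, hlt⟩
      · exact Or.inr ⟨hxC, by linarith, by linarith⟩
  obtain ⟨n, hn⟩ := exists_nat_gt ((b - a) / δ * 2)
  obtain ⟨G, hG⟩ := hstep n
  refine ⟨G, hG.mono fun x hx => ⟨hx, (hCℓ hx).1, (hCℓ hx).2.trans ?_⟩⟩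
  have hba : b - a = δ * ((b - a) / δ * 2 / 2) := by field_simp
  nlinarith

/- A Lebesgue number `δ` of the cover handles boxes of side `δ`; the side restriction is then
removed one coordinate at a time, `s` being the set of coordinates already released. -/
lemma exists_isPrimitiveOn_ball {κ : Type*} [Fintype κ] (A : PrimitiveAtlas ι (κ → ℝ)) (R : ℝ) :
    ∃ G, A.IsPrimitiveOn G (Metric.ball 0 R) := by
  classical
  obtain ⟨δ, hδ, hleb⟩ := lebesgue_number_lemma_of_metric (isCompact_closedBall (0 : κ → ℝ) R)
    A.isOpen_domain fun x _ => mem_iUnion.2 (A.exists_mem_domain x)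
  let box (s : Finset κ) (a : κ → ℝ) : Set (κ → ℝ) :=
    Metric.ball 0 R ∩ {x | ∀ k ∈ sᶜ, x ∈ ContinuousLinearMap.proj (R := ℝ) (φ := fun _ => ℝ) k ⁻¹'
      Ioo (a k) (a k + δ)}
  suffices h : ∀ s a, ∃ G, A.IsPrimitiveOn G (box s a) by
    obtain ⟨G, hG⟩ := h Finset.univ 0
    exact ⟨G, hG.mono fun x hx => ⟨hx, by simp⟩⟩
  intro s
  induction s using Finset.induction with
  | empty =>
    intro a
    rcases (box ∅ a).eq_empty_or_nonempty with hempty | ⟨x, hx⟩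
    · exact ⟨0, fun z hz => by simp [hempty] at hz⟩
    · obtain ⟨i, hi⟩ := hleb x (Metric.ball_subset_closedBall hx.1)
      refine ⟨A.fn i, (isPrimitiveOn_fn i).mono fun z hz => hi ?_⟩
      rw [Metric.mem_ball, dist_pi_lt_iff hδ]
      intro k
      have hxk := hx.2 k (by simp)
      have hzk := hz.2 k (by simp)
      simp only [mem_preimage, ContinuousLinearMap.proj_apply, mem_Ioo] at hxk hzk
      rw [Real.dist_eq, abs_lt]
      constructor <;> linarith
  | insert j s _ ih =>
    intro a
    have hopen : IsOpen (box (insert j s) a) := Metric.isOpen_ball.inter <| by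
      simp only [ofPred_forall]
      exact isOpen_biInter_finset fun k _ =>
        isOpen_Ioo.preimage (ContinuousLinearMap.proj (R := ℝ) (φ := fun _ => ℝ) k).continuous
    have hconv : Convex ℝ (box (insert j s) a) := (convex_ball _ _).inter <| by
      simp only [ofPred_forall]
      exact convex_iInter₂ fun k _ => (convex_Ioo _ _).linear_preimage
        (ContinuousLinearMap.proj (R := ℝ) (φ := fun _ => ℝ) k).toLinearMap
    refine exists_isPrimitiveOn_of_slabs hopen hconv (ContinuousLinearMap.proj j) (a := -R) (b := R)
      (fun x hx => ?_) hδ fun t => ?_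
    · exact abs_lt.1 ((norm_le_pi_norm x j).trans_lt (mem_ball_zero_iff.1 hx.1))
    · obtain ⟨G, hG⟩ := ih (Function.update a j t)
      refine ⟨G, hG.mono fun x hx => ⟨hx.1.1, fun k hk => ?_⟩⟩
      rcases eq_or_ne k j with rfl | hkj
      · simpa using hx.2
      · simpa [hkj] using hx.1.2 k (by simpa [hkj] using hk)

lemma exists_isPrimitiveOn_univ_pi {κ : Type*} [Finite κ] (A : PrimitiveAtlas ι (κ → ℝ)) :
    ∃ G, A.IsPrimitiveOn G univ := by
  have := Fintype.ofFinite κ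
  rw [← Metric.iUnion_ball_nat_succ (0 : κ → ℝ)]
  exact exists_isPrimitiveOn_iUnion (x₀ := 0) (fun _ => Metric.isOpen_ball)
    (fun m n hmn => Metric.ball_subset_ball (by gcongr)) (fun n => (convex_ball _ _).isPreconnected)
    (fun n => Metric.mem_ball_self (by positivity)) fun n => A.exists_isPrimitiveOn_ball _

lemma exists_isPrimitiveOn_source (A : PrimitiveAtlas ι X) (e : OpenPartialHomeomorph X Y)
    (he : e.target = univ) (hY : ∀ B : PrimitiveAtlas ι Y, ∃ G, B.IsPrimitiveOn G univ) :
    ∃ G, A.IsPrimitiveOn G e.source := by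
  have hsymm : Continuous e.symm := by
    rw [← continuousOn_univ, ← he]; exact e.continuousOn_symm
  obtain ⟨G, hG⟩ := hY (A.comap hsymm)
  refine ⟨fun x => G (e x), fun x hx i hi => ?_⟩
  have hGx := hG (e x) (mem_univ _) i (by rwa [comap, mem_preimage, e.left_inv hx])
  filter_upwards [(e.continuousAt hx).eventually hGx, e.open_source.mem_nhds hx] with y hy hys
  simpa only [comap, e.left_inv hx, e.left_inv hys] using hy

lemma exists_isPrimitiveOn_univ_euclideanSpace {κ : Type*} [Finite κ]
    (A : PrimitiveAtlas ι (EuclideanSpace ℝ κ)) : ∃ G, A.IsPrimitiveOn G univ :=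
  A.exists_isPrimitiveOn_source
    (EuclideanSpace.equiv κ ℝ).toHomeomorph.toOpenPartialHomeomorph rfl exists_isPrimitiveOn_univ_pi

lemma isPreconnected_sphere_compl_pair {E : Type*} [NormedAddCommGroup E] [InnerProductSpace ℝ E]
    {n : ℕ} [Fact (Module.finrank ℝ E = n + 1)] (hn : 1 < n) {N M : Metric.sphere (0 : E) 1}
    (hne : M ≠ N) : IsPreconnected ({N}ᶜ ∩ {M}ᶜ : Set (Metric.sphere (0 : E) 1)) := by
  let P := stereographic' n N
  have hsource : P.source = {N}ᶜ := stereographic'_source N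
  have htarget : P.target = univ := stereographic'_target N
  have himage : {N}ᶜ ∩ {M}ᶜ = P.symm '' {P M}ᶜ := by
    rw [← hsource]
    ext x
    constructor
    · rintro ⟨hx, hxM⟩
      exact ⟨P x, fun h => hxM (P.injOn hx (by rw [hsource]; exact hne) h), P.left_inv hx⟩
    · rintro ⟨y, hy, rfl⟩
      have hyt : y ∈ P.target := htarget ▸ mem_univ y
      exact ⟨P.map_target hyt, fun h => hy (by rw [← h, P.right_inv hyt]; rfl)⟩
  have hrank : 1 < Module.rank ℝ (EuclideanSpace ℝ (Fin n)) := by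
    rw [rank_eq_card_basis (EuclideanSpace.basisFun (Fin n) ℝ).toBasis]
    simpa using hn
  rw [himage]
  exact (isConnected_compl_singleton_of_one_lt_rank hrank _).isPreconnected.image _
    (P.continuousOn_symm.mono (htarget ▸ subset_univ _))

/-- Both stereographic charts are Euclidean spaces, and they overlap in a connected set. -/
theorem exists_isPrimitiveOn_univ_sphere {E : Type*} [NormedAddCommGroup E]
    [InnerProductSpace ℝ E] {n : ℕ} [Fact (Module.finrank ℝ E = n + 1)] (hn : 1 < n)
    (A : PrimitiveAtlas ι (Metric.sphere (0 : E) 1)) : ∃ G, A.IsPrimitiveOn G univ := by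
  have hchart : ∀ N : Metric.sphere (0 : E) 1, ∃ G, A.IsPrimitiveOn G {N}ᶜ := fun N => by
    simpa only [stereographic'_source] using A.exists_isPrimitiveOn_source (stereographic' n N)
      (stereographic'_target N) exists_isPrimitiveOn_univ_euclideanSpace
  have hfinrank : Module.finrank ℝ E = n + 1 := Fact.out
  have : Nontrivial E := Module.nontrivial_of_finrank_pos (R := ℝ) (by omega)
  obtain ⟨N⟩ : Nonempty (Metric.sphere (0 : E) 1) :=
    (NormedSpace.sphere_nonempty.2 zero_le_one).to_subtype
  have hne : -N ≠ N := fun h => ne_neg_of_mem_unit_sphere ℝ N h.symm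
  obtain ⟨G₁, hG₁⟩ := hchart N
  obtain ⟨G₂, hG₂⟩ := hchart (-N)
  obtain ⟨G, hG⟩ := hG₁.exists_union hG₂ isOpen_compl_singleton isOpen_compl_singleton
    (isPreconnected_sphere_compl_pair hn hne)
  refine ⟨G, hG.mono fun x _ => ?_⟩
  by_contra hx
  simp only [mem_union, mem_compl_iff, mem_singleton_iff, not_or, not_not] at hx
  exact hne (hx.2.symm.trans hx.1)

end PrimitiveAtlas

end LocalPrimitives

/-! ### Charts of a surface homeomorphic to the sphere -/

section SurfaceCharts

lemma nonempty_of_homeomorph_sphere {X : Type*} [TopologicalSpace X] {S : Set X}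
    (h : S ≃ₜ Metric.sphere (0 : E3) 1) : S.Nonempty := by
  have : Nonempty (Metric.sphere (0 : E3) 1) :=
    (NormedSpace.sphere_nonempty.2 zero_le_one).to_subtype
  exact Set.nonempty_coe_sort.1 (h.toEquiv.nonempty)

lemma isCompact_of_homeomorph_sphere {X : Type*} [TopologicalSpace X] {S : Set X}
    (h : S ≃ₜ Metric.sphere (0 : E3) 1) : IsCompact S :=
  isCompact_iff_compactSpace.2 h.symm.compactSpace

lemma image_closedBall_mem_nhds_of_injOn_plane {f : E2 → E2} {a : E2} {r : ℝ} (hr : 0 < r)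
    (hf : ContinuousOn f (Metric.closedBall a r)) (hinj : InjOn f (Metric.closedBall a r)) :
    f '' Metric.closedBall a r ∈ 𝓝 (f a) := by
  let J : ℂ ≃ₗᵢ[ℝ] E2 := Complex.orthonormalBasisOneI.repr
  let q : ℂ → E2 := fun z => a + r • J z
  have hq : MapsTo q (Metric.closedBall 0 1) (Metric.closedBall a r) := by
    intro z hz
    simpa only [q, Metric.mem_closedBall, dist_eq_norm, add_sub_cancel_left, norm_smul,
      LinearIsometryEquiv.norm_map, Real.norm_of_nonneg hr.le, mul_le_iff_le_one_right hr,
      sub_zero] using hz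
  have hq_cont : Continuous q := continuous_const.add (J.continuous.const_smul r)
  have hq_inj : q.Injective := fun z w hzw =>
    J.injective (smul_right_injective E2 hr.ne' (add_left_cancel hzw))
  have hnhds := image_closedBall_mem_nhds_of_injOn (f := J.symm ∘ f ∘ q)
    (J.symm.continuous.comp_continuousOn (hf.comp hq_cont.continuousOn hq))
    (J.symm.injective.comp_injOn (hinj.comp hq_inj.injOn hq))
  have hJ : IsOpenMap J := J.toHomeomorph.isOpenMap
  have himage : f ∘ q '' Metric.closedBall 0 1 ∈ 𝓝 (f (q 0)) := by
    simpa only [image_image, Function.comp_apply, J.apply_symm_apply] using hJ.image_mem_nhds hnhds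
  rw [show q 0 = a by simp [q], image_comp] at himage
  exact mem_of_superset himage (image_mono hq.image_subset)

lemma image_mem_nhds_of_injOn_sphere {E : Type*} [NormedAddCommGroup E] [InnerProductSpace ℝ E]
    [Fact (Module.finrank ℝ E = 2 + 1)] {g : E2 → Metric.sphere (0 : E) 1} {a : E2} {U : Set E2}
    (hU : U ∈ 𝓝 a) (hg : ContinuousOn g U) (hinj : InjOn g U) : g '' U ∈ 𝓝 (g a) := by
  obtain ⟨b, hbU, hba⟩ : ∃ b ∈ U, b ≠ a :=
    nonempty_of_mem (inter_mem (mem_nhdsWithin_of_mem_nhds hU) self_mem_nhdsWithin : _ ∈ 𝓝[≠] a)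
  obtain ⟨r, hr, hrU⟩ := Metric.nhds_basis_closedBall.mem_iff.1
    (inter_mem hU (isOpen_ne.mem_nhds hba.symm))
  let P := stereographic' 2 (g b)
  have hsource : MapsTo g (Metric.closedBall a r) P.source := fun x hx => by
    rw [stereographic'_source]
    exact fun hgx => (hrU hx).2 (hinj (hrU hx).1 hbU hgx)
  have ha : a ∈ Metric.closedBall a r := Metric.mem_closedBall_self hr.le
  have hnhds := image_closedBall_mem_nhds_of_injOn_plane hr
    (P.continuousOn.comp (hg.mono fun x hx => (hrU hx).1) hsource)
    (P.injOn.comp (hinj.mono fun x hx => (hrU hx).1) hsource)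
  filter_upwards [(P.continuousAt (hsource ha)).preimage_mem_nhds hnhds,
    P.open_source.mem_nhds (hsource ha)] with y hy hyP
  obtain ⟨x, hx, hxy⟩ := hy
  exact ⟨x, (hrU hx).1, P.injOn (hsource hx) hyP hxy⟩

lemma image_mem_nhdsWithin_of_injOn {S : Set E3} (h : S ≃ₜ Metric.sphere (0 : E3) 1) {f : E2 → E3}
    {U : Set E2} {a : E2} (hU : U ∈ 𝓝 a) (hf : ContinuousOn f U) (hinj : InjOn f U)
    (hmaps : MapsTo f U S) : f '' U ∈ 𝓝[S] (f a) := by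
  classical
  have : Fact (Module.finrank ℝ E3 = 2 + 1) := ⟨by simp⟩
  have haU : a ∈ U := mem_of_mem_nhds hU
  let g : E2 → Metric.sphere (0 : E3) 1 := fun x =>
    h (if hx : x ∈ U then ⟨f x, hmaps hx⟩ else ⟨f a, hmaps haU⟩)
  have hgU : ∀ x (hx : x ∈ U), g x = h ⟨f x, hmaps hx⟩ := fun x hx =>
    congrArg h (dif_pos hx)
  have hg : ContinuousOn g U := by
    rw [continuousOn_iff_continuous_domRestrict]
    have : U.domRestrict g = h ∘ hmaps.restrict f U S := funext fun x => hgU x x.2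
    rw [this]
    exact h.continuous.comp (hf.mapsToRestrict hmaps)
  have hg_inj : InjOn g U := fun x hx y hy hxy => by
    rw [hgU x hx, hgU y hy] at hxy
    exact hinj hx hy (congrArg Subtype.val (h.injective hxy))
  have hnhds := h.continuous.continuousAt.preimage_mem_nhds
    (hgU a haU ▸ image_mem_nhds_of_injOn_sphere hU hg hg_inj)
  rw [nhdsWithin_eq_map_subtype_coe (hmaps haU), mem_map]
  filter_upwards [hnhds] with y hy
  obtain ⟨x, hx, hxy⟩ := hy
  rw [hgU x hx] at hxy
  exact ⟨x, hx, congrArg Subtype.val (h.injective hxy)⟩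

/-- A regular `C²` parametrization of a relatively open piece of `S` over a convex domain,
bi-Lipschitz onto its image. Openness of the image is required for every neighbourhood of a
point, so that `f` is an embedding and not merely an injective immersion. -/
structure IsSurfaceChart (S : Set E3) (f : E2 → E3) (U : Set E2) : Prop where
  isOpen : IsOpen U
  convex : Convex ℝ U
  contDiffOn : ContDiffOn ℝ 2 f U
  mapsTo : MapsTo f U S
  exists_lipschitz : ∃ L, LipschitzOnWith L f U
  exists_antilipschitz : ∃ K, AntilipschitzWith K (U.domRestrict f)
  injective_fderiv : ∀ x ∈ U, Function.Injective (fderiv ℝ f x)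
  image_mem_nhdsWithin : ∀ x ∈ U, ∀ s ∈ 𝓝 x, f '' (U ∩ s) ∈ 𝓝[S] (f x)

lemma exists_antilipschitzWith_of_injective_fderiv {E F : Type*} [NormedAddCommGroup E]
    [NormedSpace ℝ E] [FiniteDimensional ℝ E] [NormedAddCommGroup F] [NormedSpace ℝ F] {f : E → F}
    {f' : E →L[ℝ] F} {x₀ : E} (hf : HasStrictFDerivAt f f' x₀) (hf' : Function.Injective f') :
    ∃ K, ∃ s ∈ 𝓝 x₀, AntilipschitzWith K (s.domRestrict f) := by
  obtain ⟨c, hc, hanti⟩ := (f' : E →ₗ[ℝ] F).exists_antilipschitzWith (LinearMap.ker_eq_bot.2 hf')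
  have hlt : c⁻¹ / 2 < c⁻¹ := NNReal.half_lt_self (inv_ne_zero hc.ne')
  obtain ⟨s, hs, happrox⟩ := hf.approximates_deriv_on_nhds (c := c⁻¹ / 2) (Or.inr (by positivity))
  refine ⟨(c⁻¹ - c⁻¹ / 2)⁻¹, s, hs, ?_⟩
  have hadd := AntilipschitzWith.add_lipschitzWith (hanti.domRestrict s) happrox.lipschitz_sub hlt
  convert! hadd using 1
  exact funext fun x => (add_sub_cancel (f' x : F) (f x)).symm

lemma IsSurface.exists_isSurfaceChart {S : Set E3} (hS : IsSurface 2 S)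
    (h : S ≃ₜ Metric.sphere (0 : E3) 1) {p : E3} (hp : p ∈ S) :
    ∃ f U, IsSurfaceChart S f U ∧ ∃ x ∈ U, f x = p := by
  obtain ⟨f, U, V, hU, -, hpV, hf, hinj, himage, himm⟩ := hS p hp
  obtain ⟨x₀, hx₀, rfl⟩ : p ∈ f '' U := himage ▸ ⟨hp, hpV⟩
  have hmaps : MapsTo f U S := fun x hx => (himage ▸ mem_image_of_mem f hx : f x ∈ S ∩ V).1
  have hstrict := (hf.contDiffAt (hU.mem_nhds hx₀)).hasStrictFDerivAt (by norm_num)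
  obtain ⟨L, s, hs, hL⟩ := hstrict.exists_lipschitzOnWith
  obtain ⟨K, t, ht, hK⟩ := exists_antilipschitzWith_of_injective_fderiv hstrict (himm x₀ hx₀)
  obtain ⟨r, hr, hrU⟩ := Metric.mem_nhds_iff.1 (inter_mem (inter_mem hs ht) (hU.mem_nhds hx₀))
  have hBU : Metric.ball x₀ r ⊆ U := fun x hx => (hrU hx).2
  refine ⟨f, Metric.ball x₀ r, ⟨Metric.isOpen_ball, convex_ball _ _, hf.mono hBU,
    hmaps.mono_left hBU, ⟨L, hL.mono fun x hx => (hrU hx).1.1⟩,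
    ⟨K, fun x y => hK ⟨x, (hrU x.2).1.2⟩ ⟨y, (hrU y.2).1.2⟩⟩, fun x hx => himm x (hBU hx),
    fun x hx u hu => ?_⟩, x₀, Metric.mem_ball_self hr, rfl⟩
  have hsub : Metric.ball x₀ r ∩ u ⊆ U := inter_subset_left.trans hBU
  exact image_mem_nhdsWithin_of_injOn h (inter_mem (Metric.isOpen_ball.mem_nhds hx) hu)
    (hf.continuousOn.mono hsub) (hinj.mono hsub) (hmaps.mono_left hsub)

end SurfaceCharts

/-! ### Whitney jets along a surface -/

section WhitneyJets

variable {E : Type*} [NormedAddCommGroup E] [InnerProductSpace ℝ E]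
  {v : E → E} {F F₁ F₂ : E → ℝ} {S T : Set E}

/-- The pair `(F, v)` is a Whitney jet of class `C^{1,1}` on `T`: `v` acts as a gradient of `F`
along `T`, with a uniformly quadratic Taylor remainder. It replaces the statement that `F` is a
primitive of the tangential part of `v` when `T` is a surface. -/
def IsWhitneyJetOn (v : E → E) (F : E → ℝ) (T : Set E) : Prop :=
  ∃ C, 0 ≤ C ∧ ∀ x ∈ T, ∀ y ∈ T, |F y - F x - ⟪v x, y - x⟫| ≤ C * ‖y - x‖ ^ 2

namespace IsWhitneyJetOn

lemma mono (h : IsWhitneyJetOn v F T) (hST : S ⊆ T) : IsWhitneyJetOn v F S := by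
  obtain ⟨C, hC, hF⟩ := h
  exact ⟨C, hC, fun x hx y hy => hF x (hST hx) y (hST hy)⟩

lemma sub (h₁ : IsWhitneyJetOn v F₁ T) (h₂ : IsWhitneyJetOn v F₂ T) :
    IsWhitneyJetOn 0 (F₁ - F₂) T := by
  obtain ⟨C₁, hC₁, h₁⟩ := h₁
  obtain ⟨C₂, hC₂, h₂⟩ := h₂
  refine ⟨C₁ + C₂, add_nonneg hC₁ hC₂, fun x hx y hy => ?_⟩
  calc |(F₁ - F₂) y - (F₁ - F₂) x - ⟪(0 : E → E) x, y - x⟫|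
      = |(F₁ y - F₁ x - ⟪v x, y - x⟫) - (F₂ y - F₂ x - ⟪v x, y - x⟫)| := by
        simp only [Pi.sub_apply, Pi.zero_apply, inner_zero_left]
        ring_nf
    _ ≤ C₁ * ‖y - x‖ ^ 2 + C₂ * ‖y - x‖ ^ 2 :=
        (abs_sub _ _).trans (add_le_add (h₁ x hx y hy) (h₂ x hx y hy))
    _ = (C₁ + C₂) * ‖y - x‖ ^ 2 := by ring

lemma congr_sub_const (h : IsWhitneyJetOn v F₁ T) {c : ℝ} (hF : ∀ x ∈ T, F₂ x - F₁ x = c) :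
    IsWhitneyJetOn v F₂ T := by
  obtain ⟨C, hC, hF₁⟩ := h
  refine ⟨C, hC, fun x hx y hy => ?_⟩
  rw [show F₂ y - F₂ x = F₁ y - F₁ x by linarith [hF x hx, hF y hy]]
  exact hF₁ x hx y hy

lemma continuousWithinAt (h : IsWhitneyJetOn v F T) {x : E} (hx : x ∈ T) :
    ContinuousWithinAt F T x := by
  obtain ⟨C, -, hF⟩ := h
  have hlim : Tendsto (fun y => ‖v x‖ * ‖y - x‖ + C * ‖y - x‖ ^ 2) (𝓝[T] x) (𝓝 0) := by
    have : Continuous fun y => ‖v x‖ * ‖y - x‖ + C * ‖y - x‖ ^ 2 := by fun_prop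
    simpa using (this.tendsto x).mono_left nhdsWithin_le_nhds
  refine tendsto_iff_dist_tendsto_zero.2 (squeeze_zero' (.of_forall fun _ => dist_nonneg) ?_ hlim)
  filter_upwards [self_mem_nhdsWithin] with y hy
  have h₁ := abs_sub_abs_le_abs_sub (F y - F x) ⟪v x, y - x⟫
  have h₂ := abs_real_inner_le_norm (v x) (y - x)
  rw [Real.dist_eq]
  linarith [hF x hx y hy]

end IsWhitneyJetOn

/-- Away from the diagonal the Taylor remainder is a continuous multiple of `‖y - x‖ ^ 2`, so
compactness of `T × T` makes the local estimates uniform. -/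
lemma isWhitneyJetOn_of_isCompact (hT : IsCompact T) (hv : ContinuousOn v T)
    (hloc : ∀ p ∈ T, ∃ s ∈ 𝓝[T] p, IsWhitneyJetOn v F s) : IsWhitneyJetOn v F T := by
  let R : E × E → ℝ := fun z => |F z.2 - F z.1 - ⟪v z.1, z.2 - z.1⟫|
  suffices h : ∃ C, 0 ≤ C ∧ ∀ z ∈ T ×ˢ T, R z ≤ C * ‖z.2 - z.1‖ ^ 2 by
    obtain ⟨C, hC, hR⟩ := h
    exact ⟨C, hC, fun x hx y hy => hR (x, y) ⟨hx, hy⟩⟩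
  have hF : ContinuousOn F T := fun p hp => by
    obtain ⟨s, hs, hjet⟩ := hloc p hp
    exact (hjet.continuousWithinAt (mem_of_mem_nhdsWithin hp hs)).mono_of_mem_nhdsWithin hs
  refine (hT.prod hT).induction_on (p := fun A => ∃ C, 0 ≤ C ∧ ∀ z ∈ A, R z ≤ C * ‖z.2 - z.1‖ ^ 2)
    ⟨0, le_rfl, fun z hz => hz.elim⟩ ?_ ?_ ?_
  · rintro A B hAB ⟨C, hC, hR⟩
    exact ⟨C, hC, fun z hz => hR z (hAB hz)⟩
  · rintro A B ⟨C₁, hC₁, hR₁⟩ ⟨C₂, -, hR₂⟩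
    refine ⟨max C₁ C₂, le_max_of_le_left hC₁, ?_⟩
    rintro z (hz | hz)
    · exact (hR₁ z hz).trans (by gcongr; exact le_max_left _ _)
    · exact (hR₂ z hz).trans (by gcongr; exact le_max_right _ _)
  · rintro ⟨x, y⟩ ⟨hx, hy⟩
    rcases eq_or_ne x y with rfl | hxy
    · obtain ⟨s, hs, C, hC, hR⟩ := hloc x hx
      exact ⟨s ×ˢ s, nhdsWithin_prod hs hs, C, hC, fun z hz => hR _ hz.1 _ hz.2⟩
    · have hne : ‖y - x‖ ^ 2 ≠ 0 := pow_ne_zero 2 (norm_ne_zero_iff.2 (sub_ne_zero.2 hxy.symm))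
      have hcont : ContinuousWithinAt (fun z : E × E => R z / ‖z.2 - z.1‖ ^ 2) (T ×ˢ T) (x, y) := by
        have hR : ContinuousOn R (T ×ˢ T) :=
          ((hF.comp continuousOn_snd mapsTo_snd_prod).sub
            (hF.comp continuousOn_fst mapsTo_fst_prod) |>.sub
            ((hv.comp continuousOn_fst mapsTo_fst_prod).inner (by fun_prop))).abs
        exact (hR (x, y) ⟨hx, hy⟩).div (by fun_prop) hne
      have hlt := hcont.eventually_lt_const (lt_add_one _)
      have hnorm : Continuous fun z : E × E => ‖z.2 - z.1‖ ^ 2 := by fun_prop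
      have hpos : ∀ᶠ z : E × E in 𝓝[T ×ˢ T] (x, y), ‖z.2 - z.1‖ ^ 2 ≠ 0 :=
        hnorm.continuousWithinAt.eventually_ne hne
      refine ⟨_, inter_mem hlt hpos, R (x, y) / ‖y - x‖ ^ 2 + 1, by positivity, fun z hz => ?_⟩
      have hz₂ : 0 < ‖z.2 - z.1‖ ^ 2 := (sq_nonneg _).lt_of_ne' hz.2
      exact ((div_lt_iff₀ hz₂).1 hz.1).le

lemma eq_of_norm_sub_le_sq {G H : Type*} [NormedAddCommGroup G] [NormedSpace ℝ G]
    [NormedAddCommGroup H] [NormedSpace ℝ H] {g : G → H} {U : Set G} (hU : Convex ℝ U) {C : ℝ}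
    (hg : ∀ x ∈ U, ∀ y ∈ U, ‖g y - g x‖ ≤ C * ‖y - x‖ ^ 2) {x y : G} (hx : x ∈ U) (hy : y ∈ U) :
    g y = g x := by
  have hderiv : ∀ z ∈ U, HasFDerivWithinAt g (0 : G →L[ℝ] H) U z := fun z hz => by
    have hO : (fun w => g w - g z) =O[𝓝[U] z] fun w => ‖w - z‖ ^ 2 := by
      refine .of_bound C ?_
      filter_upwards [self_mem_nhdsWithin] with w hw
      simpa using hg z hz w hw
    simpa using (hO.hasFDerivWithinAt hz one_lt_two).add_const (g z)
  have hle := hU.norm_image_sub_le_of_norm_hasFDerivWithin_le hderiv (C := 0) (by simp) hx hy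
  simpa [sub_eq_zero] using hle

lemma IsSurfaceChart.eventually_eq_of_isWhitneyJetOn_zero {S : Set E3} {f : E2 → E3} {U : Set E2}
    (hf : IsSurfaceChart S f U) {x : E2} (hx : x ∈ U) {s : Set E3} (hs : s ∈ 𝓝[S] (f x))
    {g : E3 → ℝ} (hg : IsWhitneyJetOn 0 g s) : ∀ᶠ y in 𝓝[S] (f x), g y = g (f x) := by
  obtain ⟨C, hC, hg⟩ := hg
  obtain ⟨L, hL⟩ := hf.exists_lipschitz
  have htendsto : Tendsto f (𝓝 x) (𝓝[S] (f x)) := by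
    rw [← hf.isOpen.nhdsWithin_eq hx]
    exact (hf.contDiffOn.continuousOn x hx).tendsto_nhdsWithin hf.mapsTo
  obtain ⟨r, hr, hball⟩ := Metric.mem_nhds_iff.1 (inter_mem (hf.isOpen.mem_nhds hx) (htendsto hs))
  have hsq : ∀ a ∈ Metric.ball x r, ∀ b ∈ Metric.ball x r,
      ‖g (f b) - g (f a)‖ ≤ C * L ^ 2 * ‖b - a‖ ^ 2 := fun a ha b hb => by
    calc ‖g (f b) - g (f a)‖ ≤ C * ‖f b - f a‖ ^ 2 := by
          simpa using hg _ (hball ha).2 _ (hball hb).2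
      _ ≤ C * (L * ‖b - a‖) ^ 2 := by gcongr; exact hL.norm_sub_le (hball hb).1 (hball ha).1
      _ = C * L ^ 2 * ‖b - a‖ ^ 2 := by ring
  filter_upwards [hf.image_mem_nhdsWithin x hx _ (Metric.ball_mem_nhds x hr)]
  rintro _ ⟨z, hz, rfl⟩
  exact eq_of_norm_sub_le_sq (convex_ball x r) (g := g ∘ f) hsq (Metric.mem_ball_self hr) hz.2

end WhitneyJets

/-! ### Existence of Whitney jets -/

section Primitives

variable {G E : Type*} [NormedAddCommGroup G] [NormedSpace ℝ G]
  [NormedAddCommGroup E] [InnerProductSpace ℝ E] {f : G → E} {v : E → E} {A : G → ℝ} {U : Set G}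

lemma fderiv_innerSL_comp_fderiv_apply {x : G} (hf : ContDiffAt ℝ 2 f x)
    (hv : DifferentiableAt ℝ v (f x)) :
    DifferentiableAt ℝ (fun y => (innerSL ℝ (v (f y))).comp (fderiv ℝ f y)) x ∧ ∀ a b,
      fderiv ℝ (fun y => (innerSL ℝ (v (f y))).comp (fderiv ℝ f y)) x a b =
        ⟪fderiv ℝ v (f x) (fderiv ℝ f x a), fderiv ℝ f x b⟫ +
          ⟪v (f x), fderiv ℝ (fderiv ℝ f) x a b⟫ := by
  have hf' : HasFDerivAt f (fderiv ℝ f x) x := (hf.differentiableAt two_ne_zero).hasFDerivAt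
  have hf'' : HasFDerivAt (fderiv ℝ f) (fderiv ℝ (fderiv ℝ f) x) x :=
    ((hf.fderiv_right (m := 1) le_rfl).differentiableAt one_ne_zero).hasFDerivAt
  have hω := ((innerSL ℝ (E := E)).hasFDerivAt.comp x (hv.hasFDerivAt.comp x hf')).clm_comp hf''
  refine ⟨hω.differentiableAt, fun a b => ?_⟩
  rw [show fderiv ℝ (fun y => (innerSL ℝ (v (f y))).comp (fderiv ℝ f y)) x = _ from hω.fderiv]
  simp only [add_apply, ContinuousLinearMap.comp_apply,
    ContinuousLinearMap.compL_apply, ContinuousLinearMap.flip_apply, Function.comp_apply]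
  exact add_comm _ _

/-- The pullback of a closed one-form is closed because second derivatives are symmetric; on a
convex set it is exact by the Poincaré lemma. -/
lemma exists_hasFDerivAt_innerSL_comp_fderiv (hU : IsOpen U) (hconv : Convex ℝ U)
    (hf : ContDiffOn ℝ 2 f U) (hv : Differentiable ℝ v)
    (hsymm : ∀ x ∈ U, (fderiv ℝ v (f x) : E →ₗ[ℝ] E).IsSymmetric) :
    ∃ A : G → ℝ, ∀ x ∈ U, HasFDerivAt A ((innerSL ℝ (v (f x))).comp (fderiv ℝ f x)) x := by
  have hfx : ∀ x ∈ U, ContDiffAt ℝ 2 f x := fun x hx => hf.contDiffAt (hU.mem_nhds hx)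
  refine hconv.exists_forall_hasFDerivAt_of_fderiv_symmetric hU (fun x hx =>
    (fderiv_innerSL_comp_fderiv_apply (hfx x hx) (hv _)).1.differentiableWithinAt) ?_
  intro x hx a b
  obtain ⟨-, hω⟩ := fderiv_innerSL_comp_fderiv_apply (hfx x hx) (hv (f x))
  have hvsymm : ⟪fderiv ℝ v (f x) (fderiv ℝ f x a), fderiv ℝ f x b⟫ =
      ⟪fderiv ℝ v (f x) (fderiv ℝ f x b), fderiv ℝ f x a⟫ :=
    (hsymm x hx _ _).trans (real_inner_comm _ _)
  rw [hω, hω, ((hfx x hx).isSymmSndFDerivAt (by simp)).eq a b, hvsymm]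

lemma abs_sub_sub_inner_le_sq {L K : NNReal} (hU : IsOpen U) (hconv : Convex ℝ U)
    (hf : DifferentiableOn ℝ f U) (hL : LipschitzOnWith L f U) (hK : LipschitzWith K v)
    (hA : ∀ x ∈ U, HasFDerivAt A ((innerSL ℝ (v (f x))).comp (fderiv ℝ f x)) x)
    {x y : G} (hx : x ∈ U) (hy : y ∈ U) :
    |A y - A x - ⟪v (f x), f y - f x⟫| ≤ K * L ^ 2 * ‖y - x‖ ^ 2 := by
  let s := U ∩ Metric.closedBall x ‖y - x‖
  have hderiv : ∀ z ∈ s, HasFDerivWithinAt (fun z => A z - ⟪v (f x), f z⟫)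
      ((innerSL ℝ (v (f z) - v (f x))).comp (fderiv ℝ f z)) s z := fun z hz => by
    have hfz := (hf.differentiableAt (hU.mem_nhds hz.1)).hasFDerivAt
    rw [map_sub, ContinuousLinearMap.sub_comp]
    exact ((hA z hz.1).sub ((innerSL ℝ (v (f x))).hasFDerivAt.comp z hfz)).hasFDerivWithinAt
  have hbound : ∀ z ∈ s, ‖(innerSL ℝ (v (f z) - v (f x))).comp (fderiv ℝ f z)‖ ≤
      K * (L * ‖y - x‖) * L := fun z hz => by
    refine (ContinuousLinearMap.opNorm_comp_le _ _).trans ?_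
    rw [innerSL_apply_norm]
    gcongr
    · calc ‖v (f z) - v (f x)‖ ≤ K * ‖f z - f x‖ := hK.norm_sub_le _ _
        _ ≤ K * (L * ‖z - x‖) := by gcongr; exact hL.norm_sub_le hz.1 hx
        _ ≤ K * (L * ‖y - x‖) := by gcongr; simpa [dist_eq_norm] using hz.2
    · exact norm_fderiv_le_of_lipschitzOn ℝ (hU.mem_nhds hz.1) hL
  have hmv := (hconv.inter (convex_closedBall _ _)).norm_image_sub_le_of_norm_hasFDerivWithin_le
    hderiv hbound (x := x) (y := y) ⟨hx, by simp⟩ ⟨hy, by simp [dist_eq_norm]⟩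
  calc |A y - A x - ⟪v (f x), f y - f x⟫|
      = ‖A y - ⟪v (f x), f y⟫ - (A x - ⟪v (f x), f x⟫)‖ := by
        rw [inner_sub_right, Real.norm_eq_abs]; ring_nf
    _ ≤ K * (L * ‖y - x‖) * L * ‖y - x‖ := hmv
    _ = K * L ^ 2 * ‖y - x‖ ^ 2 := by ring

lemma exists_isWhitneyJetOn_image {L K M : NNReal} (hU : IsOpen U) (hconv : Convex ℝ U)
    (hf : ContDiffOn ℝ 2 f U) (hL : LipschitzOnWith L f U)
    (hM : AntilipschitzWith M (U.domRestrict f)) (hv : Differentiable ℝ v) (hK : LipschitzWith K v)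
    (hsymm : ∀ x ∈ U, (fderiv ℝ v (f x) : E →ₗ[ℝ] E).IsSymmetric) :
    ∃ F, IsWhitneyJetOn v F (f '' U) := by
  obtain ⟨A, hA⟩ := exists_hasFDerivAt_innerSL_comp_fderiv hU hconv hf hv hsymm
  have hinj : InjOn f U := injOn_iff_injective.2 hM.injective
  refine ⟨fun y => A (Function.invFunOn f U y), K * L ^ 2 * M ^ 2, by positivity, ?_⟩
  rintro _ ⟨x, hx, rfl⟩ _ ⟨y, hy, rfl⟩
  simp only [hinj.leftInvOn_invFunOn hx, hinj.leftInvOn_invFunOn hy]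
  have hMxy : ‖y - x‖ ≤ M * ‖f y - f x‖ := by
    simpa [Subtype.dist_eq, dist_eq_norm] using hM.le_mul_dist ⟨y, hy⟩ ⟨x, hx⟩
  calc |A y - A x - ⟪v (f x), f y - f x⟫| ≤ K * L ^ 2 * ‖y - x‖ ^ 2 :=
        abs_sub_sub_inner_le_sq hU hconv (hf.differentiableOn two_ne_zero) hL hK hA hx hy
    _ ≤ K * L ^ 2 * (M * ‖f y - f x‖) ^ 2 := by gcongr
    _ = K * L ^ 2 * M ^ 2 * ‖f y - f x‖ ^ 2 := by ring

lemma exists_forall_isWhitneyJetOn_nhds {S : Set E}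
    (hcohom : ∀ 𝒜 : PrimitiveAtlas S S, ∃ G, 𝒜.IsPrimitiveOn G univ)
    (hloc : ∀ p ∈ S, ∃ s ∈ 𝓝[S] p, ∃ F, IsWhitneyJetOn v F s)
    (hconst : ∀ p ∈ S, ∀ s ∈ 𝓝[S] p, ∀ g, IsWhitneyJetOn 0 g s → ∀ᶠ y in 𝓝[S] p, g y = g p) :
    ∃ F, ∀ p ∈ S, ∃ s ∈ 𝓝[S] p, IsWhitneyJetOn v F s := by
  choose s hs F hF using fun p : S => hloc p p.2
  have hs' : ∀ p x : S, x ∈ interior (Subtype.val ⁻¹' s p) → s p ∈ 𝓝[S] (x : E) := fun p x hx =>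
    preimage_coe_mem_nhds_subtype.1 (mem_interior_iff_mem_nhds.1 hx)
  let 𝒜 : PrimitiveAtlas S S :=
    { domain := fun p => interior (Subtype.val ⁻¹' s p)
      isOpen_domain := fun p => isOpen_interior
      exists_mem_domain := fun p =>
        ⟨p, mem_interior_iff_mem_nhds.2 (preimage_coe_mem_nhds_subtype.2 (hs p))⟩
      fn := fun p x => F p x
      eventually_sub_eq := fun p q x hx => by
        have := hconst x x.2 _ (inter_mem (hs' p x hx.1) (hs' q x hx.2)) (F p - F q)
          (((hF p).mono inter_subset_left).sub ((hF q).mono inter_subset_right))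
        exact (eventually_nhds_subtype_iff _ _ _).2 this }
  obtain ⟨G, hG⟩ := hcohom 𝒜
  refine ⟨Function.extend Subtype.val G 0, fun p hp => ?_⟩
  have hext : ∀ x : S, Function.extend Subtype.val G 0 (x : E) = G x :=
    Subtype.val_injective.extend_apply G 0
  have hdiff : ∀ᶠ y in 𝓝[S] p, Function.extend Subtype.val G 0 y - F ⟨p, hp⟩ y =
      G ⟨p, hp⟩ - F ⟨p, hp⟩ p := by
    rw [← eventually_nhds_subtype_iff S ⟨p, hp⟩]
    simpa only [hext] using hG ⟨p, hp⟩ (mem_univ _) ⟨p, hp⟩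
      (mem_interior_iff_mem_nhds.2 (preimage_coe_mem_nhds_subtype.2 (hs _)))
  exact ⟨_, inter_mem (hs ⟨p, hp⟩) hdiff,
    ((hF ⟨p, hp⟩).mono inter_subset_left).congr_sub_const fun x hx => hx.2⟩

lemma IsSurface.exists_isWhitneyJetOn {S : Set E3} (hS : IsSurface 2 S)
    (h : S ≃ₜ Metric.sphere (0 : E3) 1) {v : E3 → E3} (hv : Differentiable ℝ v) {K : NNReal}
    (hK : LipschitzWith K v) (hsymm : ∀ p ∈ S, (fderiv ℝ v p : E3 →ₗ[ℝ] E3).IsSymmetric) :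
    ∃ F, IsWhitneyJetOn v F S := by
  have : Fact (Module.finrank ℝ E3 = 2 + 1) := ⟨by simp⟩
  suffices hloc : ∃ F, ∀ p ∈ S, ∃ s ∈ 𝓝[S] p, IsWhitneyJetOn v F s by
    obtain ⟨F, hF⟩ := hloc
    exact ⟨F, isWhitneyJetOn_of_isCompact (isCompact_of_homeomorph_sphere h)
      hv.continuous.continuousOn hF⟩
  refine exists_forall_isWhitneyJetOn_nhds ?_ ?_ ?_
  · exact fun 𝒜 => 𝒜.exists_isPrimitiveOn_source h.toOpenPartialHomeomorph rfl
      (PrimitiveAtlas.exists_isPrimitiveOn_univ_sphere one_lt_two)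
  · intro p hp
    obtain ⟨f, U, hf, x, hx, rfl⟩ := hS.exists_isSurfaceChart h hp
    obtain ⟨L, hL⟩ := hf.exists_lipschitz
    obtain ⟨M, hM⟩ := hf.exists_antilipschitz
    refine ⟨f '' U, by simpa using hf.image_mem_nhdsWithin x hx univ univ_mem, ?_⟩
    exact exists_isWhitneyJetOn_image hf.isOpen hf.convex hf.contDiffOn hL hM hv hK
      fun y hy => hsymm _ (hf.mapsTo hy)
  · intro p hp s hs g hg
    obtain ⟨f, U, hf, x, hx, rfl⟩ := hS.exists_isSurfaceChart h hp
    exact hf.eventually_eq_of_isWhitneyJetOn_zero hx hs hg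

end Primitives

/-! ### Extension of Whitney jets -/

section InfConvolution

variable {E : Type*} [NormedAddCommGroup E] [InnerProductSpace ℝ E]
  {v : E → E} {F : E → ℝ} {S : Set E} {C M : ℝ} {L : NNReal} {y z : E}

/-- The paraboloid of opening `M` having at `y` the value and gradient prescribed by the jet
`(F, v)`. The infimum of these over `y ∈ S` extends the jet. -/
def jetParabola (v : E → E) (F : E → ℝ) (M : ℝ) (y z : E) : ℝ :=
  F y + ⟪v y, z - y⟫ + M * ‖z - y‖ ^ 2

lemma hasFDerivAt_jetParabola :
    HasFDerivAt (jetParabola v F M y) (innerSL ℝ (v y + (2 * M) • (z - y))) z := by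
  have hsub : HasFDerivAt (fun z => z - y) (ContinuousLinearMap.id ℝ E) z :=
    (hasFDerivAt_id z).sub_const y
  have hlin : HasFDerivAt (fun z => F y + ⟪v y, z - y⟫) (innerSL ℝ (v y)) z := by
    simpa using ((innerSL ℝ (v y)).hasFDerivAt.comp z hsub).const_add (F y)
  refine (hlin.add (hsub.norm_sq.const_mul M)).congr_fderiv ?_
  ext w
  simp only [add_apply, innerSL_apply_apply, inner_add_left,
    inner_smul_left, RCLike.conj_to_real, smul_apply, nsmul_eq_mul,
    ContinuousLinearMap.comp_id, smul_eq_mul]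
  ring

lemma exists_isMinOn_jetParabola (hS : IsCompact S) (hne : S.Nonempty) (hF : ContinuousOn F S)
    (hv : ContinuousOn v S) (M : ℝ) (z : E) :
    ∃ y ∈ S, ∀ y' ∈ S, jetParabola v F M y z ≤ jetParabola v F M y' z := by
  refine hS.exists_isMinOn hne ((hF.add (hv.inner ?_)).add ?_)
  · exact (continuous_const.sub continuous_id).continuousOn
  · exact Continuous.continuousOn (by fun_prop)

/-- For large `M` the quadratic term keeps the optimal vertex `y` close to `z`. -/
lemma norm_sub_le_two_mul_infDist (hv : LipschitzWith L v) (hC : 0 ≤ C)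
    (hF : ∀ x ∈ S, ∀ y ∈ S, |F y - F x - ⟪v x, y - x⟫| ≤ C * ‖y - x‖ ^ 2)
    (hM : 2 * (L + 2 * C) + 1 ≤ M) (hy : y ∈ S)
    (hmin : ∀ y' ∈ S, jetParabola v F M y z ≤ jetParabola v F M y' z) :
    ‖z - y‖ ≤ 2 * Metric.infDist z S := by
  suffices h : ‖z - y‖ / 2 ≤ Metric.infDist z S by linarith
  refine (Metric.le_infDist ⟨y, hy⟩).2 fun x hx => ?_
  have hM₀ : 0 < M := by linarith [L.coe_nonneg]
  rw [dist_eq_norm]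
  set e := ‖z - y‖
  set d := ‖z - x‖
  have hxy : ‖x - y‖ ≤ e + d := by
    rw [show x - y = (z - y) - (z - x) by abel]
    exact norm_sub_le _ _
  have hinner : ⟪v x, z - x⟫ - ⟪v y, z - x⟫ ≤ L * (e + d) * d := by
    rw [← inner_sub_left]
    refine (real_inner_le_norm _ _).trans (mul_le_mul_of_nonneg_right ?_ (norm_nonneg _))
    exact (hv.norm_sub_le x y).trans (by gcongr)
  have hsplit : ⟪v y, z - y⟫ = ⟪v y, x - y⟫ + ⟪v y, z - x⟫ := by
    rw [← inner_add_right]; congr 1; abel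
  have hremainder : F x - F y - ⟪v y, x - y⟫ ≤ C * (e + d) ^ 2 :=
    (le_abs_self _).trans ((hF y hy x hx).trans (by gcongr))
  have hcompare : M * e ^ 2 ≤ L * (e + d) * d + C * (e + d) ^ 2 + M * d ^ 2 := by
    have := hmin x hx
    simp only [jetParabola] at this
    linarith
  have habsorb : L * (e + d) * d + C * (e + d) ^ 2 ≤ (L + 2 * C) * (e ^ 2 + 2 * d ^ 2) := by
    nlinarith [mul_nonneg L.coe_nonneg (sq_nonneg (e - d)), mul_nonneg hC (sq_nonneg (e - d)),
      mul_nonneg L.coe_nonneg (sq_nonneg e), mul_nonneg L.coe_nonneg (sq_nonneg d),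
      mul_nonneg hC (sq_nonneg d)]
  have hsq : e ^ 2 ≤ (2 * d) ^ 2 := by
    refine le_of_mul_le_mul_left ?_ hM₀
    nlinarith [mul_nonneg (sub_nonneg.2 hM) (add_nonneg (sq_nonneg e) (sq_nonneg d)),
      sq_nonneg e, sq_nonneg d]
  linarith [le_of_sq_le_sq hsq (by positivity)]

lemma lipschitzOnWith_of_isMinOn_jetParabola {B R : ℝ} (hM : 0 ≤ M) {Y : E → E}
    (hYS : ∀ z, Y z ∈ S)
    (hmin : ∀ z, ∀ y ∈ S, jetParabola v F M (Y z) z ≤ jetParabola v F M y z)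
    (hB : ∀ y ∈ S, ‖v y‖ ≤ B) (hR : ∀ y ∈ S, ‖y‖ ≤ R) :
    LipschitzOnWith (B + 2 * M * (R + R)).toNNReal (fun z => jetParabola v F M (Y z) z)
      (Metric.ball 0 R) := by
  refine LipschitzOnWith.of_le_add_mul _ fun z hz z' hz' => ?_
  have hbound : ∀ x ∈ Metric.ball (0 : E) R,
      ‖innerSL ℝ (v (Y z') + (2 * M) • (x - Y z'))‖ ≤ B + 2 * M * (R + R) := fun x hx => by
    rw [innerSL_apply_norm]
    refine (norm_add_le _ _).trans (add_le_add (hB _ (hYS z')) ?_)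
    rw [norm_smul, Real.norm_of_nonneg (by positivity)]
    gcongr
    exact (norm_sub_le _ _).trans
      (add_le_add (mem_ball_zero_iff.1 hx).le (hR _ (hYS z')))
  have hlip := (convex_ball (0 : E) R).norm_image_sub_le_of_norm_hasFDerivWithin_le
    (fun x _ => (hasFDerivAt_jetParabola (F := F)).hasFDerivWithinAt) hbound hz' hz
  have hvertex := hmin z (Y z') (hYS z')
  have hcoe := mul_le_mul_of_nonneg_right (Real.le_coe_toNNReal (B + 2 * M * (R + R)))
    (norm_nonneg (z - z'))
  rw [dist_eq_norm]
  linarith [Real.le_norm_self (jetParabola v F M (Y z') z - jetParabola v F M (Y z') z')]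

/-- The touching paraboloid determines the derivative of its lower envelope `g` at `z`. -/
lemma fderiv_eq_of_le_jetParabola {g : E → ℝ} (hg : DifferentiableAt ℝ g z)
    (hle : ∀ᶠ x in 𝓝 z, g x ≤ jetParabola v F M y x) (heq : g z = jetParabola v F M y z) :
    fderiv ℝ g z = innerSL ℝ (v y + (2 * M) • (z - y)) := by
  have hlocmin : IsLocalMin (fun x => jetParabola v F M y x - g x) z := by
    filter_upwards [hle] with x hx
    linarith
  exact (sub_eq_zero.1
    (hlocmin.hasFDerivAt_eq_zero (hasFDerivAt_jetParabola.sub hg.hasFDerivAt))).symm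

theorem IsWhitneyJetOn.exists_lipschitzWith (hF : IsWhitneyJetOn v F S) (hS : IsCompact S)
    (hne : S.Nonempty) (hv : LipschitzWith L v) (R : ℝ) :
    ∃ (g : E → ℝ) (A : NNReal) (C : ℝ), LipschitzWith A g ∧ ∀ z ∈ Metric.ball (0 : E) R,
      DifferentiableAt ℝ g z → ‖fderiv ℝ g z - innerSL ℝ (v z)‖ ≤ C * Metric.infDist z S := by
  have hFc : ContinuousOn F S := fun x hx => hF.continuousWithinAt hx
  obtain ⟨C, hC, hF⟩ := hF
  obtain ⟨B, hB⟩ := hS.exists_bound_of_continuousOn hv.continuous.continuousOn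
  obtain ⟨R₀, hR₀⟩ := hS.isBounded.exists_norm_le
  set M : ℝ := 2 * (L + 2 * C) + 1
  have hM : 0 ≤ M := by positivity
  choose Y hYS hmin using
    exists_isMinOn_jetParabola hS hne hFc hv.continuous.continuousOn M
  obtain ⟨g, hg, hgY⟩ := (lipschitzOnWith_of_isMinOn_jetParabola (R := max R R₀) hM hYS hmin hB
    fun y hy => (hR₀ y hy).trans (le_max_right _ _)).extend_real
  refine ⟨g, _, (L + 2 * M) * 2, hg, fun z hz hdiff => ?_⟩
  have hball : Metric.ball (0 : E) R ⊆ Metric.ball 0 (max R R₀) :=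
    Metric.ball_subset_ball (le_max_left _ _)
  have hle : ∀ᶠ x in 𝓝 z, g x ≤ jetParabola v F M (Y z) x := by
    filter_upwards [Metric.isOpen_ball.mem_nhds hz] with x hx
    exact (hgY (hball hx)).symm.trans_le (hmin x _ (hYS z))
  rw [fderiv_eq_of_le_jetParabola hdiff hle (hgY (hball hz)).symm, ← map_sub, innerSL_apply_norm]
  calc ‖v (Y z) + (2 * M) • (z - Y z) - v z‖ = ‖(v (Y z) - v z) + (2 * M) • (z - Y z)‖ := by
        congr 1; abel
    _ ≤ ‖v (Y z) - v z‖ + ‖(2 * M) • (z - Y z)‖ := norm_add_le _ _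
    _ ≤ L * ‖Y z - z‖ + 2 * M * ‖z - Y z‖ := by
        rw [norm_smul, Real.norm_of_nonneg (by positivity : 0 ≤ 2 * M)]
        gcongr
        exact hv.norm_sub_le _ _
    _ = (L + 2 * M) * ‖z - Y z‖ := by rw [norm_sub_rev (Y z)]; ring
    _ ≤ (L + 2 * M) * (2 * Metric.infDist z S) := by
        gcongr
        exact norm_sub_le_two_mul_infDist hv hC hF le_rfl (hYS z) (hmin z)
    _ = (L + 2 * M) * 2 * Metric.infDist z S := by ring

end InfConvolution

/-! ### Distance to the boundary and tangential fields -/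

section Tangent

lemma IsTangentAt.mono {S T : Set E3} {p u : E3} (h : IsTangentAt S p u) (hST : S ⊆ T) :
    IsTangentAt T p u := by
  obtain ⟨γ, hγS, hγ⟩ := h
  exact ⟨γ, fun t => hST (hγS t), hγ⟩

variable {F : Type*} [NormedAddCommGroup F] [NormedSpace ℝ F]

lemma deriv_le_norm_deriv_of_sub_le {k : ℝ → ℝ} {m : ℝ → F} {k' : ℝ} {m' : F} {t₀ : ℝ}
    (hk : HasDerivAt k k' t₀) (hm : HasDerivAt m m' t₀)
    (hle : ∀ t, k t - k t₀ ≤ ‖m t - m t₀‖) : k' ≤ ‖m'‖ := by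
  have hkslope := hk.tendsto_slope_zero_right
  have hmslope := hm.tendsto_slope_zero_right.norm
  refine le_of_tendsto_of_tendsto hkslope hmslope ?_
  filter_upwards [self_mem_nhdsWithin] with t (ht : 0 < t)
  rw [norm_smul, norm_inv, Real.norm_of_nonneg ht.le, smul_eq_mul]
  gcongr
  exact hle (t₀ + t)

lemma abs_deriv_le_norm_deriv_of_sub_le {k : ℝ → ℝ} {m : ℝ → F} {k' : ℝ} {m' : F}
    (hk : HasDerivAt k k' 0) (hm : HasDerivAt m m' 0)
    (hle : ∀ t, k t - k 0 ≤ ‖m t - m 0‖) : |k'| ≤ ‖m'‖ := by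
  refine abs_le'.2 ⟨deriv_le_norm_deriv_of_sub_le hk hm hle, ?_⟩
  have hk' : HasDerivAt (fun t => k (-t)) (-k') 0 := by
    simpa [Function.comp_def] using
      HasDerivAt.scomp (0 : ℝ) (g₁ := k) (by simpa using hk) (hasDerivAt_neg 0)
  have hm' : HasDerivAt (fun t => m (-t)) (-m') 0 := by
    simpa [Function.comp_def] using
      HasDerivAt.scomp (0 : ℝ) (g₁ := m) (by simpa using hm) (hasDerivAt_neg 0)
  simpa using deriv_le_norm_deriv_of_sub_le hk' hm' (fun t => by simpa using hle (-t))

/-- Moving the foot point `y` along a curve in `T` with velocity `u` while `x` moves with velocity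
`w` bounds the growth of the distance to `T`. -/
lemma abs_fderiv_infDist_le_norm_sub {T : Set E3} {x y u : E3} (hxy : Metric.infDist x T = dist x y)
    (hu : IsTangentAt T y u) (w : E3) :
    |fderiv ℝ (Metric.infDist · T) x w| ≤ ‖w - u‖ := by
  by_cases hd : DifferentiableAt ℝ (Metric.infDist · T) x
  swap
  · simp [fderiv_zero_of_not_differentiableAt hd]
  obtain ⟨γ, hγT, rfl, hγ⟩ := hu
  have hline : HasDerivAt (fun t : ℝ => x + t • w) w 0 := by
    simpa using ((hasDerivAt_id (0 : ℝ)).smul_const w).const_add x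
  have hdist : HasDerivAt (fun t : ℝ => Metric.infDist (x + t • w) T)
      (fderiv ℝ (Metric.infDist · T) x w) 0 :=
    HasFDerivAt.comp_hasDerivAt (l := (Metric.infDist · T)) 0
      (by simpa using hd.hasFDerivAt) hline
  refine abs_deriv_le_norm_deriv_of_sub_le hdist (hline.sub hγ) fun t => ?_
  have hfoot := Metric.infDist_le_dist_of_mem (x := x + t • w) (hγT t)
  have htri := norm_sub_norm_le (x + t • w - γ t) (x - γ 0)
  simp only [zero_smul, add_zero, Pi.sub_apply, hxy]
  rw [dist_eq_norm] at hfoot ⊢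
  linarith

lemma abs_fderiv_infDist_compl_le {Ω : Set E3} {v : E3 → E3} {L : NNReal}
    (hΩ : IsOpen Ω) (hΩ' : Ω ≠ univ) (hv : LipschitzWith L v)
    (ht : ∀ p ∈ frontier Ω, IsTangentAt (frontier Ω) p (v p)) {x : E3} (hx : x ∈ Ω) :
    |fderiv ℝ (Metric.infDist · Ωᶜ) x (v x)| ≤ L * Metric.infDist x Ωᶜ := by
  obtain ⟨y, hy, hxy⟩ := exists_mem_frontier_infDist_compl_eq_dist hx hΩ'
  have hfr : frontier Ω ⊆ Ωᶜ := fun z hz => (hΩ.frontier_eq ▸ hz).2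
  rw [hxy, dist_eq_norm]
  exact (abs_fderiv_infDist_le_norm_sub hxy ((ht y hy).mono hfr) (v x)).trans
    (hv.norm_sub_le x y)

end Tangent

section BoundaryCutoff

variable {E : Type*} [NormedAddCommGroup E]
  {Ω : Set E} {x : E}

/-- The cutoff vanishing where `infDist x Ωᶜ ≤ 1 / n` and equal to `1` where
`2 / n ≤ infDist x Ωᶜ`. It is a function of the distance so that its derivative along fields
tangent to the boundary stays bounded as `n → ∞`. -/
def boundaryCutoff (Ω : Set E) (n : ℕ) (x : E) : ℝ :=
  max 0 (min 1 (n * Metric.infDist x Ωᶜ - 1))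

lemma boundaryCutoff_mem_Icc (n : ℕ) (x : E) : boundaryCutoff Ω n x ∈ Icc (0 : ℝ) 1 :=
  ⟨le_max_left _ _, max_le zero_le_one (min_le_left _ _)⟩

lemma lipschitzWith_boundaryCutoff (n : ℕ) : LipschitzWith n (boundaryCutoff Ω n) := by
  refine LipschitzWith.const_max (LipschitzWith.const_min (LipschitzWith.of_dist_le_mul ?_) 1) 0
  intro x y
  rw [Real.dist_eq, sub_sub_sub_cancel_right, ← mul_sub, abs_mul, Nat.abs_cast, NNReal.coe_natCast,
    ← Real.dist_eq]
  gcongr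
  simpa using (Metric.lipschitz_infDist_pt Ωᶜ).dist_le_mul x y

lemma hasCompactSupport_boundaryCutoff [ProperSpace E] (hb : Bornology.IsBounded Ω) (n : ℕ) :
    HasCompactSupport (boundaryCutoff Ω n) := by
  refine HasCompactSupport.intro hb.isCompact_closure fun x hx => ?_
  have hxΩ : x ∈ Ωᶜ := fun h => hx (subset_closure h)
  simp [boundaryCutoff, Metric.infDist_zero_of_mem hxΩ]

lemma tsupport_boundaryCutoff_subset (n : ℕ) : tsupport (boundaryCutoff Ω n) ⊆ Ω := by
  have hclosed : IsClosed {x | 1 ≤ n * Metric.infDist x Ωᶜ} :=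
    isClosed_le continuous_const (continuous_const.mul (Metric.continuous_infDist_pt _))
  refine (closure_minimal (fun x hx => ?_) hclosed).trans fun x hx => ?_
  · by_contra h
    exact hx (max_eq_left ((min_le_right _ _).trans (sub_nonpos.2 (not_le.1 h).le)))
  · by_contra hxΩ
    rw [mem_ofPred_eq, Metric.infDist_zero_of_mem (show x ∈ Ωᶜ from hxΩ)] at hx
    norm_num at hx

lemma eventually_boundaryCutoff_eventuallyEq_one (hΩ : IsOpen Ω) (hΩ' : Ω ≠ univ) (hx : x ∈ Ω) :
    ∀ᶠ n : ℕ in atTop, boundaryCutoff Ω n =ᶠ[𝓝 x] 1 := by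
  have hpos : 0 < Metric.infDist x Ωᶜ :=
    (hΩ.isClosed_compl.notMem_iff_infDist_pos (nonempty_compl.2 hΩ')).1 (notMem_compl_iff.2 hx)
  filter_upwards [(tendsto_natCast_atTop_atTop.atTop_mul_const hpos).eventually_gt_atTop 2]
    with n hn
  have hcont : Continuous fun y => (n : ℝ) * Metric.infDist y Ωᶜ :=
    continuous_const.mul (Metric.continuous_infDist_pt _)
  filter_upwards [hcont.continuousAt.eventually (lt_mem_nhds hn)] with y hy
  simp only [boundaryCutoff, Pi.one_apply]
  rw [min_eq_left (by linarith), max_eq_right zero_le_one]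

lemma abs_fderiv_boundaryCutoff_le [NormedSpace ℝ E] {C : ℝ} (hC : 0 ≤ C) {w : E}
    (hw : |fderiv ℝ (Metric.infDist · Ωᶜ) x w| ≤ C * Metric.infDist x Ωᶜ) (n : ℕ) :
    |fderiv ℝ (boundaryCutoff Ω n) x w| ≤ 2 * C := by
  have hcrit : boundaryCutoff Ω n x = 0 ∨ boundaryCutoff Ω n x = 1 →
      fderiv ℝ (boundaryCutoff Ω n) x = 0 := by
    rintro (h | h)
    · exact IsLocalMin.fderiv_eq_zero (.of_forall fun y => h ▸ (boundaryCutoff_mem_Icc n y).1)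
    · exact IsLocalMax.fderiv_eq_zero (.of_forall fun y => h ▸ (boundaryCutoff_mem_Icc n y).2)
  set d : E → ℝ := (Metric.infDist · Ωᶜ)
  have hd : Continuous fun y => n * d y :=
    continuous_const.mul (Metric.continuous_infDist_pt _)
  rcases le_or_gt (n * d x) 1 with h₁ | h₁
  · rw [hcrit (.inl (max_eq_left ((min_le_right _ _).trans (sub_nonpos.2 h₁))))]
    simpa
  rcases le_or_gt 2 (n * d x) with h₂ | h₂
  · rw [hcrit (.inr _)]
    · simpa
    · simp only [boundaryCutoff]
      rw [min_eq_left (by linarith), max_eq_right zero_le_one]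
  have hloc : boundaryCutoff Ω n =ᶠ[𝓝 x] fun y => n * d y - 1 := by
    filter_upwards [hd.continuousAt.eventually (lt_mem_nhds h₁),
      hd.continuousAt.eventually (gt_mem_nhds h₂)] with y hy₁ hy₂
    simp only [boundaryCutoff]
    rw [min_eq_right (by linarith), max_eq_right (by linarith)]
  have hfderiv : fderiv ℝ (boundaryCutoff Ω n) x = (n : ℝ) • fderiv ℝ d x := by
    rw [hloc.fderiv_eq, fderiv_sub_const]
    exact congrFun (fderiv_const_smul_field (f := d) (n : ℝ)) x
  rw [hfderiv]
  calc |((n : ℝ) • fderiv ℝ d x) w| = n * |fderiv ℝ d x w| := by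
        rw [smul_apply, smul_eq_mul, abs_mul, Nat.abs_cast]
    _ ≤ n * (C * d x) := by gcongr
    _ = n * d x * C := by ring
    _ ≤ 2 * C := by gcongr

end BoundaryCutoff

/-! ### Integration by parts for Lipschitz functions -/

section Lipschitz

lemma lipschitzWith_mul_of_abs_le {X : Type*} [PseudoMetricSpace X] {f g : X → ℝ}
    {K L A B : NNReal} (hf : LipschitzWith K f) (hg : LipschitzWith L g)
    (hA : ∀ x, |f x| ≤ A) (hB : ∀ x, f x ≠ 0 → |g x| ≤ B) :
    LipschitzWith (K * B + A * L) (fun x => f x * g x) := by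
  have hkey : ∀ x y, f y ≠ 0 → |f x * g x - f y * g y| ≤ (K * B + A * L) * dist x y := by
    intro x y hy
    calc |f x * g x - f y * g y| = |(f x - f y) * g y + f x * (g x - g y)| := by ring_nf
      _ ≤ |f x - f y| * |g y| + |f x| * |g x - g y| := by
          rw [← abs_mul, ← abs_mul]; exact abs_add_le _ _
      _ ≤ K * dist x y * B + A * (L * dist x y) := by
          gcongr
          · exact hf.dist_le_mul x y
          · exact hB y hy
          · exact hA x
          · exact hg.dist_le_mul x y
      _ = (K * B + A * L) * dist x y := by ring
  refine LipschitzWith.of_dist_le_mul fun x y => ?_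
  push_cast
  rw [Real.dist_eq]
  by_cases hy : f y = 0
  · by_cases hx : f x = 0
    · rw [hx, hy, zero_mul, zero_mul, sub_zero, abs_zero]
      positivity
    · rw [abs_sub_comm, dist_comm]
      exact hkey y x hx
  · exact hkey x y hy

variable {E : Type*} [NormedAddCommGroup E] [NormedSpace ℝ E]
  {f g k : E → ℝ} {K L : NNReal}

lemma abs_fderiv_apply_le_of_lipschitzWith (hf : LipschitzWith K f) (x a : E) :
    |fderiv ℝ f x a| ≤ K * ‖a‖ :=
  (fderiv ℝ f x).le_of_opNorm_le (norm_fderiv_le_of_lipschitz ℝ hf) a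

variable [MeasurableSpace E] [BorelSpace E] {μ : Measure E}

lemma integrable_fderiv_apply_mul (hg : LipschitzWith L g) (hgc : HasCompactSupport g)
    (hk : LocallyIntegrable k μ) (a : E) : Integrable (fun x => fderiv ℝ g x a * k x) μ := by
  have hsupp : Function.support (fun x => fderiv ℝ g x a * k x) ⊆ tsupport g := by
    refine (Function.support_mul_subset_left _ _).trans fun x hx => ?_
    exact support_fderiv_subset ℝ fun h => hx (by simp [h])
  rw [← integrableOn_iff_integrable_of_support_subset hsupp]
  exact (hk.integrableOn_isCompact hgc.isCompact).bdd_mul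
    (measurable_fderiv_apply_const ℝ g a).aestronglyMeasurable
    (.of_forall fun x => abs_fderiv_apply_le_of_lipschitzWith hg x a)

variable [FiniteDimensional ℝ E] [μ.IsAddHaarMeasure]

lemma lineDeriv_ae_eq_fderiv (hf : LipschitzWith K f) (a : E) :
    (fun x => lineDeriv ℝ f x a) =ᵐ[μ] fun x => fderiv ℝ f x a := by
  filter_upwards [hf.ae_differentiableAt (μ := μ)] with x hx
  exact hx.lineDeriv_eq_fderiv

lemma locallyIntegrable_fderiv_apply (hf : LipschitzWith K f) (a : E) :
    LocallyIntegrable (fun x => fderiv ℝ f x a) μ :=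
  (hf.locallyIntegrable_lineDeriv a).congr (lineDeriv_ae_eq_fderiv hf a)

lemma integral_fderiv_mul_eq_neg (hf : LipschitzWith K f) (hg : LipschitzWith L g)
    (hgc : HasCompactSupport g) (a : E) :
    ∫ x, fderiv ℝ f x a * g x ∂μ = -∫ x, fderiv ℝ g x a * f x ∂μ := by
  calc ∫ x, fderiv ℝ f x a * g x ∂μ = ∫ x, lineDeriv ℝ f x a * g x ∂μ :=
        integral_congr_ae ((lineDeriv_ae_eq_fderiv hf a).symm.mul .rfl)
    _ = ∫ x, lineDeriv ℝ g x (-a) * f x ∂μ := hf.integral_lineDeriv_mul_eq hg hgc a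
    _ = ∫ x, -(fderiv ℝ g x a * f x) ∂μ := by
        refine integral_congr_ae ?_
        filter_upwards [lineDeriv_ae_eq_fderiv (μ := μ) hg (-a)] with x hx
        rw [hx, map_neg, neg_mul]
    _ = -∫ x, fderiv ℝ g x a * f x ∂μ := integral_neg _

lemma integral_fderiv_mul_comp_sub (hf : LipschitzWith K f) (hg : LipschitzWith L g)
    (hgc : HasCompactSupport g) (a h : E) :
    ∫ x, fderiv ℝ f x a * g (x - h) ∂μ = -∫ x, f (x + h) * fderiv ℝ g x a ∂μ := by
  have hg' : LipschitzWith L (fun x => g (x - h)) := by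
    simpa [Function.comp_def] using hg.comp (LipschitzWith.id.sub (LipschitzWith.const h))
  have hgc' : HasCompactSupport (fun x => g (x - h)) :=
    hgc.comp_homeomorph (Homeomorph.subRight h)
  rw [integral_fderiv_mul_eq_neg hf hg' hgc' a,
    ← integral_add_right_eq_self (fun x => fderiv ℝ (fun y => g (y - h)) x a * f x) h]
  simp only [fderiv_comp_sub, add_sub_cancel_right, mul_comm]

lemma tendsto_integral_inv_smul_sub_mul_fderiv (hg : LipschitzWith L g)
    (hgc : HasCompactSupport g) (hk : LocallyIntegrable k μ) (a : E) :
    Tendsto (fun t : ℝ => ∫ x, t⁻¹ • (g (x + t • a) - g x) * k x ∂μ) (𝓝[>] 0)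
      (𝓝 (∫ x, fderiv ℝ g x a * k x ∂μ)) := by
  set T := Metric.cthickening ‖a‖ (tsupport g)
  have hT : IsCompact T := hgc.isCompact.cthickening
  have hgT : ∀ x ∉ T, ∀ t ∈ Ico (0 : ℝ) 1, g (x + t • a) = 0 := by
    refine fun x hx t ht => image_eq_zero_of_notMem_tsupport fun h => hx ?_
    refine Metric.mem_cthickening_of_dist_le x _ _ _ h ?_
    rw [dist_self_add_right, norm_smul, Real.norm_of_nonneg ht.1]
    exact mul_le_of_le_one_left (norm_nonneg a) ht.2.le
  have hlim := hg.integral_inv_smul_sub_mul_tendsto_integral_lineDeriv_mul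
    ((integrable_indicator_iff hT.measurableSet).2 (hk.integrableOn_isCompact hT)) a
  have hinteg : ∫ x, lineDeriv ℝ g x a * T.indicator k x ∂μ = ∫ x, fderiv ℝ g x a * k x ∂μ := by
    refine integral_congr_ae ?_
    filter_upwards [lineDeriv_ae_eq_fderiv (μ := μ) hg a] with x hx
    rw [hx]
    by_cases hxT : x ∈ T
    · rw [indicator_of_mem hxT]
    · have hgx : fderiv ℝ g x = 0 := by
        by_contra h
        exact hxT (Metric.self_subset_cthickening _ (support_fderiv_subset ℝ h))
      simp [hgx]
  rw [hinteg] at hlim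
  refine hlim.congr' ?_
  filter_upwards [Ioo_mem_nhdsGT one_pos] with t ht
  refine integral_congr_ae (.of_forall fun x => ?_)
  by_cases hxT : x ∈ T
  · simp only [indicator_of_mem hxT]
  · have hgx : g x = 0 := by simpa using hgT x hxT 0 ⟨le_rfl, one_pos⟩
    simp [hgT x hxT t ⟨ht.1.le, ht.2⟩, hgx]

lemma integral_inv_smul_sub_mul_fderiv (hf : LipschitzWith K f) (hg : LipschitzWith L g)
    (hgc : HasCompactSupport g) (a c : E) (t : ℝ) :
    ∫ x, t⁻¹ • (f (x + t • a) - f x) * fderiv ℝ g x c ∂μ =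
      -∫ x, t⁻¹ • (g (x + t • -a) - g x) * fderiv ℝ f x c ∂μ := by
  have hf' : ∀ h : E, Integrable (fun x => f (x + h) * fderiv ℝ g x c) μ := fun h => by
    simpa only [Function.comp_apply, mul_comm] using integrable_fderiv_apply_mul hg hgc
      ((hf.continuous.comp (continuous_add_const h)).locallyIntegrable (μ := μ)) c
  have hg' : ∀ h : E, Integrable (fun x => fderiv ℝ f x c * g (x - h)) μ := fun h => by
    have hgh : HasCompactSupport (fun x => g (x - h)) :=
      hgc.comp_homeomorph (Homeomorph.subRight h)
    simpa only [smul_eq_mul, Function.comp_apply, mul_comm] using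
      (locallyIntegrable_fderiv_apply (μ := μ) hf c).integrable_smul_left_of_hasCompactSupport
        (hg.continuous.comp (by fun_prop)) hgh
  have h₀ := integral_fderiv_mul_comp_sub (μ := μ) hf hg hgc c 0
  have ht := integral_fderiv_mul_comp_sub (μ := μ) hf hg hgc c (t • a)
  have hf₀ := hf' 0
  have hg₀ := hg' 0
  simp only [sub_zero, add_zero] at h₀ hf₀ hg₀
  calc ∫ x, t⁻¹ • (f (x + t • a) - f x) * fderiv ℝ g x c ∂μ
      = ∫ x, t⁻¹ * (f (x + t • a) * fderiv ℝ g x c - f x * fderiv ℝ g x c) ∂μ := by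
        congr! 2 with x
        rw [smul_eq_mul]
        ring
    _ = -(t⁻¹ * (∫ x, fderiv ℝ f x c * g (x - t • a) ∂μ - ∫ x, fderiv ℝ f x c * g x ∂μ)) := by
        rw [integral_const_mul, integral_sub (hf' _) hf₀, ht, h₀]
        ring
    _ = -∫ x, t⁻¹ • (g (x + t • -a) - g x) * fderiv ℝ f x c ∂μ := by
        rw [← integral_sub (hg' _) hg₀, ← integral_const_mul]
        congr! 3
        rw [smul_neg, ← sub_eq_add_neg, smul_eq_mul]
        ring

/-- Second derivatives commute in the sense of distributions, so they do so when split between two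
Lipschitz factors. -/
lemma integral_fderiv_mul_fderiv_comm (hf : LipschitzWith K f) (hg : LipschitzWith L g)
    (hgc : HasCompactSupport g) (a c : E) :
    ∫ x, fderiv ℝ f x a * fderiv ℝ g x c ∂μ = ∫ x, fderiv ℝ f x c * fderiv ℝ g x a ∂μ := by
  have hgint : Integrable (fun x => fderiv ℝ g x c) μ := by
    simpa using integrable_fderiv_apply_mul hg hgc (locallyIntegrable_const (μ := μ) (1 : ℝ)) c
  have hf_lim : Tendsto (fun t : ℝ => ∫ x, t⁻¹ • (f (x + t • a) - f x) * fderiv ℝ g x c ∂μ)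
      (𝓝[>] 0) (𝓝 (∫ x, fderiv ℝ f x a * fderiv ℝ g x c ∂μ)) := by
    convert hf.integral_inv_smul_sub_mul_tendsto_integral_lineDeriv_mul hgint a using 2
    exact integral_congr_ae ((lineDeriv_ae_eq_fderiv hf a).symm.mul .rfl)
  have hg_lim := (tendsto_integral_inv_smul_sub_mul_fderiv hg hgc
    (locallyIntegrable_fderiv_apply (μ := μ) hf c) (-a)).neg
  simp_rw [integral_inv_smul_sub_mul_fderiv hf hg hgc a c] at hf_lim
  refine (tendsto_nhds_unique hf_lim hg_lim).trans ?_
  simp only [map_neg, neg_mul, integral_neg, neg_neg]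
  simp only [mul_comm]

end Lipschitz

/-! ### Weakly solenoidal and irrotational fields -/

section WeakFields

variable {E : Type*} [NormedAddCommGroup E] [InnerProductSpace ℝ E] {Ω : Set E} {v X B : E → E}
  {g ψ F : E → ℝ} {K L A : NNReal}

lemma fderiv_inner_const_left {x : E} (hv : DifferentiableAt ℝ v x) (c w : E) :
    fderiv ℝ (fun y => ⟪c, v y⟫) x w = ⟪c, fderiv ℝ v x w⟫ := by
  simp [fderiv_inner_apply ℝ (differentiableAt_const c) hv]

lemma lipschitzWith_inner_const_left (hv : LipschitzWith L v) (c : E) :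
    LipschitzWith (‖innerSL ℝ c‖₊ * L) fun x => ⟪c, v x⟫ :=
  (innerSL ℝ c).lipschitz.comp hv

variable [FiniteDimensional ℝ E]

lemma norm_gradient_le_of_lipschitzWith (hF : LipschitzWith A F) (x : E) : ‖gradient F x‖ ≤ A := by
  simpa only [gradient, LinearIsometryEquiv.norm_map] using norm_fderiv_le_of_lipschitz ℝ hF

lemma exists_lipschitzWith_boundaryCutoff_mul (hb : Bornology.IsBounded Ω)
    (hψ : LipschitzWith K ψ) (n : ℕ) :
    ∃ K', LipschitzWith K' fun y => boundaryCutoff Ω n y * ψ y := by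
  obtain ⟨R, hR⟩ := hb.isCompact_closure.exists_bound_of_continuousOn hψ.continuous.continuousOn
  have hχ : ∀ x, |boundaryCutoff Ω n x| ≤ (1 : NNReal) := fun x =>
    (abs_of_nonneg (boundaryCutoff_mem_Icc n x).1).trans_le (boundaryCutoff_mem_Icc n x).2
  refine ⟨_, lipschitzWith_mul_of_abs_le (B := R.toNNReal) (lipschitzWith_boundaryCutoff n) hψ hχ
    fun x hx => (hR x (subset_closure ?_)).trans (Real.le_coe_toNNReal R)⟩
  exact tsupport_boundaryCutoff_subset n (subset_tsupport _ hx)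

variable [MeasurableSpace E] [BorelSpace E]

/-- The field `X`, extended by zero outside `Ω`, is divergence free in the sense of distributions:
this comprises both `div X = 0` in `Ω` and the tangency of `X` to the boundary. Test functions need
not be compactly supported, which is what bounded `Ω` calls for. -/
def IsWeaklySolenoidalOn (X : E → E) (Ω : Set E) : Prop :=
  ∀ ⦃ψ : E → ℝ⦄ ⦃K : NNReal⦄, LipschitzWith K ψ → ∫ x in Ω, fderiv ℝ ψ x (X x) = 0

/-- The field `B`, extended by zero outside `Ω`, is curl free in the sense of distributions. In the
absence of a cross product, this is expressed by the exterior products of the covector `B` with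
pairs of constant covectors. -/
def IsWeaklyIrrotationalOn (B : E → E) (Ω : Set E) : Prop :=
  ∀ a c : E, IsWeaklySolenoidalOn (fun x => ⟪c, B x⟫ • a - ⟪a, B x⟫ • c) Ω

lemma measurable_gradient (F : E → ℝ) : Measurable (gradient F) :=
  (InnerProductSpace.toDual ℝ E).symm.continuous.measurable.comp (measurable_fderiv ℝ F)

lemma aestronglyMeasurable_fderiv_apply {μ : Measure E} (g : E → ℝ)
    (hX : AEStronglyMeasurable X μ) : AEStronglyMeasurable (fun x => fderiv ℝ g x (X x)) μ :=
  (ContinuousLinearMap.apply ℝ ℝ).aestronglyMeasurable_comp₂ hX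
    (measurable_fderiv ℝ g).aestronglyMeasurable

lemma ae_fderiv_boundaryCutoff_mul (hψ : LipschitzWith K ψ) (n : ℕ) :
    ∀ᵐ x, ∀ w, fderiv ℝ (fun y => boundaryCutoff Ω n y * ψ y) x w =
      boundaryCutoff Ω n x * fderiv ℝ ψ x w + ψ x * fderiv ℝ (boundaryCutoff Ω n) x w := by
  filter_upwards [hψ.ae_differentiableAt (μ := volume),
    (lipschitzWith_boundaryCutoff (Ω := Ω) n).ae_differentiableAt (μ := volume)] with x hψx hχx w
  simp [fderiv_fun_mul hχx hψx]

lemma tendsto_setIntegral_fderiv_boundaryCutoff_mul (hΩ : IsOpen Ω) (hΩ' : Ω ≠ univ)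
    (hb : Bornology.IsBounded Ω) (hX : AEStronglyMeasurable X (volume.restrict Ω)) {M C : ℝ}
    (hM : ∀ᵐ x, x ∈ Ω → ‖X x‖ ≤ M) (hC : 0 ≤ C)
    (hd : ∀ᵐ x, x ∈ Ω → |fderiv ℝ (Metric.infDist · Ωᶜ) x (X x)| ≤ C * Metric.infDist x Ωᶜ)
    (hψ : LipschitzWith K ψ) :
    Tendsto (fun n : ℕ => ∫ x in Ω, fderiv ℝ (fun y => boundaryCutoff Ω n y * ψ y) x (X x))
      atTop (𝓝 (∫ x in Ω, fderiv ℝ ψ x (X x))) := by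
  obtain ⟨R, hR⟩ := hb.isCompact_closure.exists_bound_of_continuousOn hψ.continuous.continuousOn
  refine tendsto_integral_of_dominated_convergence (fun _ => 1 * (K * M) + R * (2 * C))
    (fun n => aestronglyMeasurable_fderiv_apply _ hX)
    (integrableOn_const hb.measure_lt_top.ne) (fun n => ?_) ?_
  · filter_upwards [ae_restrict_mem hΩ.measurableSet,
      ae_restrict_of_ae (ae_fderiv_boundaryCutoff_mul (Ω := Ω) hψ n),
      ae_restrict_of_ae hM, ae_restrict_of_ae hd] with x hx hprod hM hd
    have hψx : |ψ x| ≤ R := hR x (subset_closure hx)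
    have hψX : |fderiv ℝ ψ x (X x)| ≤ K * M :=
      (abs_fderiv_apply_le_of_lipschitzWith hψ x _).trans (by gcongr; exact hM hx)
    have hχ := boundaryCutoff_mem_Icc (Ω := Ω) n x
    calc ‖fderiv ℝ (fun y => boundaryCutoff Ω n y * ψ y) x (X x)‖
        ≤ |boundaryCutoff Ω n x| * |fderiv ℝ ψ x (X x)| +
          |ψ x| * |fderiv ℝ (boundaryCutoff Ω n) x (X x)| := by
          rw [hprod, Real.norm_eq_abs, ← abs_mul, ← abs_mul]
          exact abs_add_le _ _
      _ ≤ 1 * (K * M) + R * (2 * C) := by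
          gcongr
          · exact (abs_of_nonneg hχ.1).trans_le hχ.2
          · exact (abs_nonneg _).trans hψx
          · exact abs_fderiv_boundaryCutoff_le hC (hd hx) n
  · filter_upwards [ae_restrict_mem hΩ.measurableSet] with x hx
    refine tendsto_const_nhds.congr' ?_
    filter_upwards [eventually_boundaryCutoff_eventuallyEq_one hΩ hΩ' hx] with n hn
    have heq : (fun y => boundaryCutoff Ω n y * ψ y) =ᶠ[𝓝 x] ψ := hn.mono fun y hy => by simp [hy]
    rw [heq.fderiv_eq]

/-- Since `X` is tangent to the boundary, cutting a test function off near the boundary costs only a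
bounded error on a set of vanishing measure. -/
lemma isWeaklySolenoidalOn_of_tsupport_subset (hΩ : IsOpen Ω) (hΩ' : Ω ≠ univ)
    (hb : Bornology.IsBounded Ω) (hX : AEStronglyMeasurable X (volume.restrict Ω)) {M C : ℝ}
    (hM : ∀ᵐ x, x ∈ Ω → ‖X x‖ ≤ M) (hC : 0 ≤ C)
    (hd : ∀ᵐ x, x ∈ Ω → |fderiv ℝ (Metric.infDist · Ωᶜ) x (X x)| ≤ C * Metric.infDist x Ωᶜ)
    (htest : ∀ ⦃g : E → ℝ⦄ ⦃K : NNReal⦄, LipschitzWith K g → HasCompactSupport g →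
      tsupport g ⊆ Ω → ∫ x, fderiv ℝ g x (X x) = 0) :
    IsWeaklySolenoidalOn X Ω := by
  intro ψ K hψ
  have hzero : ∀ n, ∫ x in Ω, fderiv ℝ (fun y => boundaryCutoff Ω n y * ψ y) x (X x) = 0 := by
    intro n
    have hsupp : tsupport (fun y => boundaryCutoff Ω n y * ψ y) ⊆ Ω :=
      tsupport_mul_subset_left.trans (tsupport_boundaryCutoff_subset n)
    obtain ⟨K', hlip⟩ := exists_lipschitzWith_boundaryCutoff_mul hb hψ n
    rw [setIntegral_eq_integral_of_forall_compl_eq_zero,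
      htest hlip (hasCompactSupport_boundaryCutoff hb n).mul_right hsupp]
    intro x hx
    have hfderiv : fderiv ℝ (fun y => boundaryCutoff Ω n y * ψ y) x = 0 := by
      by_contra h
      exact hx (hsupp (support_fderiv_subset ℝ h))
    rw [hfderiv, zero_apply]
  have hlim := tendsto_setIntegral_fderiv_boundaryCutoff_mul hΩ hΩ' hb hX hM hC hd hψ
  simp_rw [hzero] at hlim
  exact tendsto_nhds_unique hlim tendsto_const_nhds

lemma integral_fderiv_mul_inner (hv : LipschitzWith L v) (hg : LipschitzWith K g)
    (hgc : HasCompactSupport g) (a c : E) :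
    ∫ x, fderiv ℝ g x a * ⟪c, v x⟫ = -∫ x, ⟪c, fderiv ℝ v x a⟫ * g x := by
  have hparts := integral_fderiv_mul_eq_neg (μ := volume)
    (lipschitzWith_inner_const_left hv c) hg hgc a
  rw [← neg_eq_iff_eq_neg, ← hparts]
  refine integral_congr_ae ?_
  filter_upwards [hv.ae_differentiableAt (μ := volume)] with x hx
  rw [fderiv_inner_const_left hx]

lemma integral_fderiv_apply_eq_neg_integral_trace_mul (hv : LipschitzWith L v)
    (hg : LipschitzWith K g) (hgc : HasCompactSupport g) :
    ∫ x, fderiv ℝ g x (v x) = -∫ x, LinearMap.trace ℝ E (fderiv ℝ v x) * g x := by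
  let b := stdOrthonormalBasis ℝ E
  have hleft : ∀ i, Integrable fun x => fderiv ℝ g x (b i) * ⟪b i, v x⟫ := fun i =>
    integrable_fderiv_apply_mul hg hgc
      (continuous_const.inner hv.continuous).locallyIntegrable (b i)
  have hright : ∀ i, Integrable fun x => ⟪b i, fderiv ℝ v x (b i)⟫ * g x := by
    intro i
    refine ((locallyIntegrable_fderiv_apply (μ := volume) (lipschitzWith_inner_const_left hv (b i))
      (b i)).integrable_smul_left_of_hasCompactSupport hg.continuous hgc).congr ?_
    filter_upwards [hv.ae_differentiableAt (μ := volume)] with x hx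
    rw [fderiv_inner_const_left hx, smul_eq_mul, mul_comm]
  calc ∫ x, fderiv ℝ g x (v x) = ∫ x, ∑ i, fderiv ℝ g x (b i) * ⟪b i, v x⟫ := by
        congr! 2 with x
        conv_lhs => rw [← b.sum_repr' (v x)]
        simp [mul_comm]
    _ = -∫ x, ∑ i, ⟪b i, fderiv ℝ v x (b i)⟫ * g x := by
        rw [integral_finsetSum _ fun i _ => hleft i, integral_finsetSum _ fun i _ => hright i,
          ← Finset.sum_neg_distrib]
        exact Finset.sum_congr rfl fun i _ => integral_fderiv_mul_inner hv hg hgc (b i) (b i)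
    _ = -∫ x, LinearMap.trace ℝ E (fderiv ℝ v x) * g x := by
        simp only [LinearMap.trace_eq_sum_inner _ b, Finset.sum_mul, ContinuousLinearMap.coe_coe]

lemma isWeaklySolenoidalOn_of_trace_eq_zero (hΩ : IsOpen Ω) (hΩ' : Ω ≠ univ)
    (hb : Bornology.IsBounded Ω) (hv : LipschitzWith L v)
    (hd : ∀ x ∈ Ω, |fderiv ℝ (Metric.infDist · Ωᶜ) x (v x)| ≤ L * Metric.infDist x Ωᶜ)
    (hdiv : ∀ x ∈ Ω, LinearMap.trace ℝ E (fderiv ℝ v x) = 0) : IsWeaklySolenoidalOn v Ω := by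
  obtain ⟨M, hM⟩ := hb.isCompact_closure.exists_bound_of_continuousOn hv.continuous.continuousOn
  refine isWeaklySolenoidalOn_of_tsupport_subset hΩ hΩ' hb hv.continuous.aestronglyMeasurable
    (.of_forall fun x hx => hM x (subset_closure hx)) L.coe_nonneg (.of_forall hd)
    fun g K hg hgc hgΩ => ?_
  rw [integral_fderiv_apply_eq_neg_integral_trace_mul hv hg hgc, neg_eq_zero]
  refine integral_eq_zero_of_ae (.of_forall fun x => ?_)
  by_cases hx : x ∈ Ω
  · simp [hdiv x hx]
  · simp [image_eq_zero_of_notMem_tsupport fun h => hx (hgΩ h)]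

lemma isWeaklyIrrotationalOn_of_norm_le_infDist (hΩ : IsOpen Ω) (hΩ' : Ω ≠ univ)
    (hb : Bornology.IsBounded Ω) (hB : AEStronglyMeasurable B (volume.restrict Ω)) {C : ℝ}
    (hC : 0 ≤ C) (hBd : ∀ᵐ x, x ∈ Ω → ‖B x‖ ≤ C * Metric.infDist x Ωᶜ)
    (htest : ∀ ⦃g : E → ℝ⦄ ⦃K : NNReal⦄, LipschitzWith K g → HasCompactSupport g →
      tsupport g ⊆ Ω → ∀ a c : E, ∫ x, fderiv ℝ g x (⟪c, B x⟫ • a - ⟪a, B x⟫ • c) = 0) :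
    IsWeaklyIrrotationalOn B Ω := by
  intro a c
  obtain ⟨D, hD⟩ := hb.isCompact_closure.exists_bound_of_continuousOn
    (Metric.continuous_infDist_pt Ωᶜ).continuousOn
  have hX : ∀ᵐ x, x ∈ Ω → ‖⟪c, B x⟫ • a - ⟪a, B x⟫ • c‖ ≤
      2 * ‖a‖ * ‖c‖ * C * Metric.infDist x Ωᶜ := by
    filter_upwards [hBd] with x hBd hx
    calc ‖⟪c, B x⟫ • a - ⟪a, B x⟫ • c‖ ≤ |⟪c, B x⟫| * ‖a‖ + |⟪a, B x⟫| * ‖c‖ := by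
          simpa only [norm_smul, Real.norm_eq_abs] using norm_sub_le (⟪c, B x⟫ • a) (⟪a, B x⟫ • c)
      _ ≤ ‖c‖ * ‖B x‖ * ‖a‖ + ‖a‖ * ‖B x‖ * ‖c‖ := by
          gcongr <;> exact abs_real_inner_le_norm _ _
      _ = 2 * ‖a‖ * ‖c‖ * ‖B x‖ := by ring
      _ ≤ 2 * ‖a‖ * ‖c‖ * (C * Metric.infDist x Ωᶜ) := by gcongr; exact hBd hx
      _ = _ := by ring
  refine isWeaklySolenoidalOn_of_tsupport_subset hΩ hΩ' hb (M := 2 * ‖a‖ * ‖c‖ * C * D)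
    (C := 2 * ‖a‖ * ‖c‖ * C) ?_ ?_ (by positivity) ?_
    fun g K hg hgc hgΩ => htest hg hgc hgΩ a c
  · exact ((aestronglyMeasurable_const.inner hB).smul_const a).sub
      ((aestronglyMeasurable_const.inner hB).smul_const c)
  · filter_upwards [hX] with x hX hx
    refine (hX hx).trans ?_
    gcongr
    exact (le_abs_self _).trans (hD x (subset_closure hx))
  · filter_upwards [hX] with x hX hx
    refine (abs_fderiv_apply_le_of_lipschitzWith (Metric.lipschitz_infDist_pt Ωᶜ) x _).trans ?_
    simpa using hX hx

lemma isWeaklyIrrotationalOn_sub_gradient (hΩ : IsOpen Ω) (hΩ' : Ω ≠ univ)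
    (hb : Bornology.IsBounded Ω) (hv : LipschitzWith L v)
    (hsymm : ∀ x ∈ Ω, (fderiv ℝ v x : E →ₗ[ℝ] E).IsSymmetric) (hF : LipschitzWith A F) {C : ℝ}
    (hC : 0 ≤ C) (hFd : ∀ᵐ x, x ∈ Ω → ‖v x - gradient F x‖ ≤ C * Metric.infDist x Ωᶜ) :
    IsWeaklyIrrotationalOn (fun x => v x - gradient F x) Ω := by
  have hmeas : AEStronglyMeasurable (fun x => v x - gradient F x) (volume.restrict Ω) :=
    hv.continuous.aestronglyMeasurable.sub (measurable_gradient F).aestronglyMeasurable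
  refine isWeaklyIrrotationalOn_of_norm_le_infDist hΩ hΩ' hb hmeas hC hFd
    fun g K hg hgc hgΩ a c => ?_
  have hv_int : ∀ a c : E, Integrable fun x => fderiv ℝ g x a * ⟪c, v x⟫ := fun a c =>
    integrable_fderiv_apply_mul hg hgc (continuous_const.inner hv.continuous).locallyIntegrable a
  have hF_int : ∀ a c : E, Integrable fun x => fderiv ℝ g x a * fderiv ℝ F x c := fun a c =>
    integrable_fderiv_apply_mul hg hgc (locallyIntegrable_fderiv_apply hF c) a
  have hvF_int : ∀ a c : E,
      Integrable fun x => fderiv ℝ g x a * ⟪c, v x⟫ - fderiv ℝ g x a * fderiv ℝ F x c :=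
    fun a c => (hv_int a c).sub (hF_int a c)
  have hv_comm : ∫ x, fderiv ℝ g x a * ⟪c, v x⟫ = ∫ x, fderiv ℝ g x c * ⟪a, v x⟫ := by
    rw [integral_fderiv_mul_inner hv hg hgc, integral_fderiv_mul_inner hv hg hgc]
    congr! 3 with x
    by_cases hx : x ∈ Ω
    · have hsymm_x : ⟪fderiv ℝ v x a, c⟫ = ⟪a, fderiv ℝ v x c⟫ := hsymm x hx a c
      rw [real_inner_comm, hsymm_x]
    · simp [image_eq_zero_of_notMem_tsupport fun h => hx (hgΩ h)]
  have hF_comm : ∫ x, fderiv ℝ g x a * fderiv ℝ F x c = ∫ x, fderiv ℝ g x c * fderiv ℝ F x a := by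
    simpa only [mul_comm] using integral_fderiv_mul_fderiv_comm (μ := volume) hF hg hgc c a
  calc ∫ x, fderiv ℝ g x (⟪c, v x - gradient F x⟫ • a - ⟪a, v x - gradient F x⟫ • c)
      = ∫ x, ((fderiv ℝ g x a * ⟪c, v x⟫ - fderiv ℝ g x a * fderiv ℝ F x c) -
          (fderiv ℝ g x c * ⟪a, v x⟫ - fderiv ℝ g x c * fderiv ℝ F x a)) := by
        congr! 2 with x
        simp only [inner_sub_right, inner_gradient_right, map_sub, map_smul, smul_eq_mul,
          conj_trivial]
        ring
    _ = 0 := by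
        rw [integral_sub (hvF_int a c) (hvF_int c a),
          integral_sub (hv_int a c) (hF_int a c), integral_sub (hv_int c a) (hF_int c a),
          hv_comm, hF_comm, sub_self]

end WeakFields

/-! ### Orthogonality of solenoidal and irrotational fields -/

section Orthogonality

open scoped Convolution

variable {E : Type*} [NormedAddCommGroup E] [InnerProductSpace ℝ E] [FiniteDimensional ℝ E]
  [MeasurableSpace E] [BorelSpace E] {Ω : Set E} {v B b : E → E} {φ G F : E → ℝ} {A L : NNReal}

lemma IsWeaklyIrrotationalOn.indicator (hΩ : MeasurableSet Ω) (hB : IsWeaklyIrrotationalOn B Ω) :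
    IsWeaklyIrrotationalOn (Ω.indicator B) univ := by
  intro a c ψ K hψ
  rw [setIntegral_univ, ← hB a c hψ, ← integral_indicator hΩ]
  refine integral_congr_ae (.of_forall fun x => ?_)
  by_cases hx : x ∈ Ω <;> simp [hx]

lemma integrable_fderiv_sub_mul_inner (hB : LocallyIntegrable B) (hφ : ContDiff ℝ 1 φ)
    (hφc : HasCompactSupport φ) (x a c : E) :
    Integrable fun y => fderiv ℝ φ (x - y) a * ⟪c, B y⟫ := by
  have hc : HasCompactSupport fun t => fderiv ℝ φ t a :=
    (hφc.fderiv ℝ).comp_left (g := fun l : E →L[ℝ] ℝ => l a) rfl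
  have hconv : Integrable fun t => fderiv ℝ φ t a • B (x - t) :=
    hc.convolutionExists_left (ContinuousLinearMap.lsmul ℝ ℝ : ℝ →L[ℝ] E →L[ℝ] E)
      ((hφ.continuous_fderiv one_ne_zero).clm_apply continuous_const) hB x
  simpa [inner_smul_right] using (hconv.const_inner (𝕜 := ℝ) c).comp_sub_left x

lemma inner_fderiv_convolution_apply (hB : LocallyIntegrable B) (hφ : ContDiff ℝ 1 φ)
    (hφc : HasCompactSupport φ) (x a c : E) :
    ⟪c, fderiv ℝ (φ ⋆[ContinuousLinearMap.lsmul ℝ ℝ, volume] B) x a⟫ =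
      ∫ y, fderiv ℝ φ (x - y) a * ⟪c, B y⟫ := by
  have hφD := hφ.continuous_fderiv one_ne_zero
  have hconv := (hφc.fderiv ℝ).convolutionExists_left
    ((ContinuousLinearMap.lsmul ℝ ℝ : ℝ →L[ℝ] E →L[ℝ] E).precompL E) hφD hB x
  have hconv_a : Integrable fun t => fderiv ℝ φ t a • B (x - t) :=
    (ContinuousLinearMap.apply ℝ E a).integrable_comp hconv
  rw [(hφc.hasFDerivAt_convolution_left (ContinuousLinearMap.lsmul ℝ ℝ) hφ hB x).fderiv,
    convolution_def, ContinuousLinearMap.integral_apply hconv]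
  change ⟪c, ∫ t, fderiv ℝ φ t a • B (x - t)⟫ = _
  rw [← integral_inner hconv_a, ← integral_sub_left_eq_self _ _ x]
  simp only [inner_smul_right, sub_sub_cancel]

lemma isSymmetric_fderiv_convolution (hB : LocallyIntegrable B)
    (hB' : IsWeaklyIrrotationalOn B univ) (hφ : ContDiff ℝ 1 φ) (hφc : HasCompactSupport φ)
    (x : E) : (fderiv ℝ (φ ⋆[ContinuousLinearMap.lsmul ℝ ℝ, volume] B) x :
      E →ₗ[ℝ] E).IsSymmetric := by
  intro a c
  obtain ⟨K, hK⟩ := hφ.lipschitzWith_of_hasCompactSupport hφc one_ne_zero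
  have htest : LipschitzWith (K * 1) fun y => φ (x - y) :=
    hK.comp (IsometryEquiv.subLeft x).isometry.lipschitz
  have hfderiv : ∀ y, fderiv ℝ (fun y => φ (x - y)) y = -fderiv ℝ φ (x - y) := fun y => by
    simpa [Function.comp_def] using ((hφ.differentiable one_ne_zero (x - y)).hasFDerivAt.comp y
      ((hasFDerivAt_id y).const_sub x)).fderiv
  have hcurl := hB' a c htest
  simp only [hfderiv, neg_apply, setIntegral_univ, map_sub, map_smul, smul_eq_mul] at hcurl
  have hsub := integrable_fderiv_sub_mul_inner hB hφ hφc x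
  rw [ContinuousLinearMap.coe_coe, real_inner_comm, inner_fderiv_convolution_apply hB hφ hφc,
    inner_fderiv_convolution_apply hB hφ hφc, ← sub_eq_zero, ← integral_sub (hsub _ _) (hsub _ _),
    ← neg_eq_zero, ← integral_neg, ← hcurl]
  congr! 2 with y
  ring

lemma exists_hasFDerivAt_innerSL_convolution (hB : LocallyIntegrable B)
    (hB' : IsWeaklyIrrotationalOn B univ) (hφ : ContDiff ℝ 1 φ) (hφc : HasCompactSupport φ) :
    ∃ G : E → ℝ, ∀ x,
      HasFDerivAt G (innerSL ℝ ((φ ⋆[ContinuousLinearMap.lsmul ℝ ℝ, volume] B) x)) x := by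
  have hd x := (hφc.hasFDerivAt_convolution_left (ContinuousLinearMap.lsmul ℝ ℝ :
    ℝ →L[ℝ] E →L[ℝ] E) hφ hB x).differentiableAt
  have hω x := (innerSL ℝ : E →L[ℝ] E →L[ℝ] ℝ).hasFDerivAt.comp x (hd x).hasFDerivAt
  obtain ⟨G, hG⟩ := Convex.exists_forall_hasFDerivAt_of_fderiv_symmetric
    (ω := fun x => innerSL ℝ ((φ ⋆[ContinuousLinearMap.lsmul ℝ ℝ, volume] B) x))
    convex_univ isOpen_univ (fun x _ => (hω x).differentiableAt.differentiableWithinAt)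
    fun x _ a c => by
      have hfderiv := (hω x).fderiv
      rw [Function.comp_def] at hfderiv
      rw [hfderiv]
      exact (isSymmetric_fderiv_convolution hB hB' hφ hφc x a c).trans (real_inner_comm _ _)
  exact ⟨G, fun x => hG x (mem_univ x)⟩

lemma IsWeaklySolenoidalOn.setIntegral_inner_eq_zero (hv : IsWeaklySolenoidalOn v Ω)
    (hΩ : IsOpen Ω) (hb : Bornology.IsBounded Ω) (hbc : Continuous b)
    (hG : ∀ x, HasFDerivAt G (innerSL ℝ (b x)) x) : ∫ x in Ω, ⟪b x, v x⟫ = 0 := by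
  obtain ⟨R, hR0, hR⟩ := hb.subset_ball_lt 0 0
  let η : ContDiffBump (0 : E) := ⟨R, R + 1, hR0, by linarith⟩
  have hGc : ContDiff ℝ 1 G := by
    rw [contDiff_one_iff_fderiv, funext fun x => (hG x).fderiv]
    exact ⟨fun x => (hG x).differentiableAt, (innerSL ℝ).continuous.comp hbc⟩
  obtain ⟨K, hK⟩ := (η.contDiff.mul hGc).lipschitzWith_of_hasCompactSupport
    (f := fun x => η x * G x) η.hasCompactSupport.mul_right one_ne_zero
  rw [← hv hK]
  refine setIntegral_congr_fun hΩ.measurableSet fun x hx => ?_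
  have hηG : (fun y => η y * G y) =ᶠ[𝓝 x] G := by
    filter_upwards [Metric.isOpen_ball.mem_nhds (hR hx)] with y hy
    rw [η.one_of_mem_closedBall (Metric.ball_subset_closedBall hy), one_mul]
  simp only [hηG.fderiv_eq, (hG x).fderiv, innerSL_apply_apply]

/-- Bump functions at the origin with radii tending to zero at comparable rates, as needed for the
almost everywhere convergence of convolutions. -/
def shrinkingBump (n : ℕ) : ContDiffBump (0 : E) :=
  ⟨1 / (n + 1), 2 / (n + 1), by positivity, by gcongr; norm_num⟩

/-- The mollification of a vector field at the scale of `shrinkingBump n`. -/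
def mollify (B : E → E) (n : ℕ) : E → E :=
  (shrinkingBump n).normed volume ⋆[ContinuousLinearMap.lsmul ℝ ℝ, volume] B

lemma continuous_mollify (hB : LocallyIntegrable B) (n : ℕ) : Continuous (mollify B n) :=
  (shrinkingBump n).hasCompactSupport_normed.continuous_convolution_left _
    (shrinkingBump n).continuous_normed hB

lemma norm_mollify_le (hB : AEStronglyMeasurable B) {M : ℝ} (hM : ∀ x, ‖B x‖ ≤ M) (n : ℕ) (x : E) :
    ‖mollify B n x‖ ≤ M := by
  let φ : ContDiffBump (0 : E) := shrinkingBump n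
  simpa only [mollify, φ, dist_zero_right] using dist_convolution_le (x₀ := x) (z₀ := (0 : E))
    ((norm_nonneg _).trans (hM 0)) (φ.support_normed_eq (μ := volume)).subset φ.nonneg_normed
    φ.integral_normed hB fun y _ => by simpa only [dist_zero_right] using hM y

lemma ae_tendsto_mollify (hB : LocallyIntegrable B) :
    ∀ᵐ x, Tendsto (fun n => mollify B n x) atTop (𝓝 (B x)) := by
  refine ContDiffBump.ae_convolution_tendsto_right_of_locallyIntegrable (K := 2) ?_
    (.of_forall fun n => ?_) hB
  · have hlim := (tendsto_one_div_add_atTop_nhds_zero_nat (𝕜 := ℝ)).const_mul 2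
    simpa only [shrinkingBump, mul_one_div, mul_zero] using hlim
  · exact (mul_one_div _ _).ge

lemma setIntegral_inner_eq_zero_of_isWeaklyIrrotationalOn (hΩ : IsOpen Ω)
    (hb : Bornology.IsBounded Ω) (hv : IsWeaklySolenoidalOn v Ω) (hvc : Continuous v)
    (hB : IsWeaklyIrrotationalOn B Ω) (hBm : AEStronglyMeasurable B (volume.restrict Ω)) {M : ℝ}
    (hM : ∀ x ∈ Ω, ‖B x‖ ≤ M) (hM0 : 0 ≤ M) : ∫ x in Ω, ⟪B x, v x⟫ = 0 := by
  obtain ⟨N, hN⟩ := hb.isCompact_closure.exists_bound_of_continuousOn hvc.continuousOn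
  have hBΩ : IntegrableOn B Ω := .of_bound hb.measure_lt_top hBm M
    ((ae_restrict_mem hΩ.measurableSet).mono hM)
  have hBl : LocallyIntegrable (Ω.indicator B) :=
    ((integrable_indicator_iff hΩ.measurableSet).2 hBΩ).locallyIntegrable
  have hBM : ∀ x, ‖Ω.indicator B x‖ ≤ M := fun x => by
    by_cases hx : x ∈ Ω <;> simp [hx, hM, hM0]
  have hzero : ∀ n, ∫ x in Ω, ⟪mollify (Ω.indicator B) n x, v x⟫ = 0 := fun n => by
    obtain ⟨G, hG⟩ := exists_hasFDerivAt_innerSL_convolution hBl (hB.indicator hΩ.measurableSet)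
      ((shrinkingBump n).contDiff_normed (μ := volume)) (shrinkingBump n).hasCompactSupport_normed
    exact hv.setIntegral_inner_eq_zero hΩ hb (continuous_mollify hBl n) hG
  have hlim : Tendsto (fun n => ∫ x in Ω, ⟪mollify (Ω.indicator B) n x, v x⟫) atTop
      (𝓝 (∫ x in Ω, ⟪B x, v x⟫)) := by
    refine tendsto_integral_of_dominated_convergence (fun _ => M * N)
      (fun n => ((continuous_mollify hBl n).inner hvc).aestronglyMeasurable)
      (integrableOn_const hb.measure_lt_top.ne) (fun n => ?_) ?_
    · filter_upwards [ae_restrict_mem hΩ.measurableSet] with x hx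
      refine (norm_inner_le_norm _ _).trans ?_
      gcongr
      · exact norm_mollify_le hBl.aestronglyMeasurable hBM n x
      · exact hN x (subset_closure hx)
    · filter_upwards [ae_restrict_mem hΩ.measurableSet, ae_restrict_of_ae (ae_tendsto_mollify hBl)]
        with x hx hlim
      rw [indicator_of_mem hx] at hlim
      exact hlim.inner tendsto_const_nhds
  simp_rw [hzero] at hlim
  exact tendsto_nhds_unique hlim tendsto_const_nhds

/-- On `Ω` the solenoidal field `v` is orthogonal to both `v - ∇F` and `∇F`. -/
lemma eqOn_zero_of_isWeaklyIrrotationalOn_sub_gradient (hΩ : IsOpen Ω)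
    (hb : Bornology.IsBounded Ω) (hvc : Continuous v) (hv : IsWeaklySolenoidalOn v Ω)
    (hF : LipschitzWith A F) (hirr : IsWeaklyIrrotationalOn (fun x => v x - gradient F x) Ω) :
    EqOn v 0 Ω := by
  obtain ⟨M, hM⟩ := hb.isCompact_closure.exists_bound_of_continuousOn hvc.continuousOn
  replace hM : ∀ x ∈ Ω, ‖v x‖ ≤ M := fun x hx => hM x (subset_closure hx)
  have hle : ∀ x ∈ Ω, ‖v x - gradient F x‖ ≤ |M| + A := fun x hx =>
    (norm_sub_le _ _).trans (add_le_add ((hM x hx).trans (le_abs_self M))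
      (norm_gradient_le_of_lipschitzWith hF x))
  have hinner : ∫ x in Ω, ⟪v x - gradient F x, v x⟫ = 0 :=
    setIntegral_inner_eq_zero_of_isWeaklyIrrotationalOn hΩ hb hv hvc hirr
      (hvc.aestronglyMeasurable.sub (measurable_gradient F).aestronglyMeasurable) hle
      (by positivity)
  have hv_int : IntegrableOn (fun x => ‖v x‖ ^ 2) Ω :=
    (hvc.norm.pow 2).locallyIntegrable.integrableOn_isCompact hb.isCompact_closure
      |>.mono_set subset_closure
  have hF_int : IntegrableOn (fun x => fderiv ℝ F x (v x)) Ω := by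
    refine .of_bound hb.measure_lt_top (aestronglyMeasurable_fderiv_apply F
      hvc.aestronglyMeasurable) (A * M) ?_
    filter_upwards [ae_restrict_mem hΩ.measurableSet] with x hx
    exact (abs_fderiv_apply_le_of_lipschitzWith hF x (v x)).trans (by gcongr; exact hM x hx)
  have hsq : ∫ x in Ω, ‖v x‖ ^ 2 = 0 := by
    calc ∫ x in Ω, ‖v x‖ ^ 2
        = (∫ x in Ω, ‖v x‖ ^ 2) - ∫ x in Ω, fderiv ℝ F x (v x) := by rw [hv hF, sub_zero]
      _ = ∫ x in Ω, ⟪v x - gradient F x, v x⟫ := by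
          rw [← integral_sub hv_int hF_int]
          simp only [inner_sub_left, real_inner_self_eq_norm_sq, inner_gradient_left]
      _ = 0 := hinner
  rw [setIntegral_eq_zero_iff_of_nonneg_ae (.of_forall fun x => by positivity) hv_int] at hsq
  intro x hx
  simpa using Measure.eqOn_open_of_ae_eq hsq hΩ (hvc.norm.pow 2).continuousOn
    continuousOn_const hx

end Orthogonality

/-! ### Divergence-free and curl-free fields -/

section DivCurl

open scoped Manifold ContDiff

variable {E : Type*} [NormedAddCommGroup E] {F : Type*} [NormedAddCommGroup F]

section CutoffAndClosure

variable [NormedSpace ℝ E] [NormedSpace ℝ F] {v : E → F} {K W Ω : Set E} {x : E}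

lemma exists_contDiff_hasCompactSupport_eventuallyEq [FiniteDimensional ℝ E] {n : ℕ∞}
    (hK : IsCompact K) (hW : IsOpen W) (hKW : K ⊆ W) (hv : ContDiffOn ℝ n v W) :
    ∃ w : E → F, ContDiff ℝ n w ∧ HasCompactSupport w ∧ ∀ x ∈ K, w =ᶠ[𝓝 x] v := by
  obtain ⟨K', hK', hKK', hK'W⟩ := exists_compact_between hK hW hKW
  obtain ⟨f, hf_one, hf_zero, -⟩ :=
    exists_contMDiffMap_one_nhds_of_subset_interior (n := n) 𝓘(ℝ, E) hK.isClosed hKK'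
  refine ⟨fun x => f x • v x, contDiff_iff_contDiffAt.2 fun x => ?_,
    .intro hK' fun x hx => by simp only [hf_zero x hx, zero_smul], fun x hx => ?_⟩
  · by_cases hx : x ∈ W
    · exact f.contMDiff.contDiff.contDiffAt.smul (hv.contDiffAt (hW.mem_nhds hx))
    · refine (contDiffAt_const (c := 0)).congr_of_eventuallyEq ?_
      filter_upwards [hK'.isClosed.isOpen_compl.mem_nhds fun h => hx (hK'W h)] with y hy
      rw [hf_zero y hy, zero_smul]
  · filter_upwards [eventually_nhdsSet_iff_forall.1 hf_one x hx] with y hy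
    rw [hy, one_smul]

lemma fderiv_mem_of_mem_closure (hW : IsOpen W) (hv : ContDiffOn ℝ 1 v W) {A : Set (E →L[ℝ] F)}
    (hA : IsClosed A) (h : ∀ y ∈ Ω, fderiv ℝ v y ∈ A) (hx : x ∈ closure Ω) (hxW : x ∈ W) :
    fderiv ℝ v x ∈ A := by
  have hcont : ContinuousAt (fderiv ℝ v) x :=
    (hv.continuousOn_fderiv_of_isOpen hW le_rfl).continuousAt (hW.mem_nhds hxW)
  exact hA.closure_subset (hcont.continuousWithinAt.mem_closure hx h)

lemma eqOn_fderiv_zero_of_eqOn_zero (hΩ : IsOpen Ω) (hv : EqOn v 0 Ω) :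
    EqOn (fderiv ℝ v) 0 Ω := by
  intro x hx
  rw [(hv.eventuallyEq_of_mem (hΩ.mem_nhds hx)).fderiv_eq]
  simp

end CutoffAndClosure

variable [InnerProductSpace ℝ E]

variable (E) in
/-- The symmetric trace-free endomorphisms. A field is curl free and divergence free at a point
exactly when its Jacobian there belongs to this space. -/
def symTraceless : Submodule ℝ (E →L[ℝ] E) where
  carrier := {T | (T : E →ₗ[ℝ] E).IsSymmetric ∧ LinearMap.trace ℝ E T = 0}
  zero_mem' := by simp
  add_mem' hT hT' := ⟨hT.1.add hT'.1, by simp [hT.2, hT'.2]⟩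
  smul_mem' c _ hT := ⟨hT.1.smul (conj_trivial c), by simp [hT.2]⟩

variable [FiniteDimensional ℝ E]

lemma isClosed_symTraceless : IsClosed (symTraceless E : Set (E →L[ℝ] E)) :=
  (symTraceless E).closed_of_finiteDimensional

/-- An endomorphism of rank one satisfies `T ^ 2 = (trace T) • T`. -/
lemma eq_zero_of_mem_symTraceless_of_finrank_range_le_one {T : E →L[ℝ] E}
    (hT : T ∈ symTraceless E) (hrank : Module.finrank ℝ (T : E →ₗ[ℝ] E).range ≤ 1) : T = 0 := by
  obtain ⟨⟨n, hn⟩, hspan⟩ := finrank_le_one_iff.1 hrank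
  obtain rfl | hn0 := eq_or_ne n 0
  · ext x
    obtain ⟨c, hc⟩ := hspan ⟨T x, x, rfl⟩
    simpa using (congrArg Subtype.val hc).symm
  let φ : E →ₗ[ℝ] ℝ := ⟪n, n⟫⁻¹ • innerₗ E n ∘ₗ T
  have hφ : (T : E →ₗ[ℝ] E) = φ.smulRight n := by
    ext x
    obtain ⟨c, hc⟩ := hspan ⟨T x, x, rfl⟩
    have hTx : T x = c • n := (congrArg Subtype.val hc).symm
    simp [φ, hTx, mul_comm c, hn0]
  have hφn : φ n = 0 := by rw [← LinearMap.trace_smulRight, ← hφ, hT.2]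
  have hT_apply : ∀ x, T x = φ x • n := LinearMap.congr_fun hφ
  ext x
  have hself : ⟪T x, T x⟫ = ⟪x, T (T x)⟫ := hT.1 x (T x)
  rwa [hT_apply (T x), hT_apply x, map_smul, hφn, smul_zero, zero_smul, inner_zero_right,
    inner_self_eq_zero, ← hT_apply x] at hself

end DivCurl

section E3DivCurl

variable {v : E3 → E3} {p : E3}

lemma trace_fderiv_eq_div3 (v : E3 → E3) (p : E3) :
    LinearMap.trace ℝ E3 (fderiv ℝ v p) = div3 v p := by
  rw [LinearMap.trace_eq_sum_inner _ (EuclideanSpace.basisFun (Fin 3) ℝ)]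
  simp [div3, pder, e3, EuclideanSpace.inner_single_left]

lemma isSymmetric_fderiv_of_curl3_eq_zero (h : curl3 v p = 0) :
    (fderiv ℝ v p : E3 →ₗ[ℝ] E3).IsSymmetric := by
  have hcoord : ∀ i, curl3 v p i = 0 := by simp [h]
  have hpder : ∀ i j, pder v j i p = pder v i j p := by
    have h0 := hcoord 0
    have h1 := hcoord 1
    have h2 := hcoord 2
    simp only [curl3, mk3, PiLp.continuousLinearEquiv_symm_apply, Matrix.cons_val] at h0 h1 h2
    intro i j
    fin_cases i <;> fin_cases j <;> simp only [Fin.zero_eta, Fin.mk_one, Fin.reduceFinMk] <;>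
      linarith
  let b := (EuclideanSpace.basisFun (Fin 3) ℝ).toBasis
  have hforms : innerₗ E3 ∘ₗ (fderiv ℝ v p : E3 →ₗ[ℝ] E3) =
      (innerₗ E3).compl₂ (fderiv ℝ v p : E3 →ₗ[ℝ] E3) :=
    LinearMap.ext_basis b b fun i j => by
      simpa [b, pder, e3, EuclideanSpace.inner_single_left, EuclideanSpace.inner_single_right]
        using hpder i j
  exact fun x y => LinearMap.congr_fun₂ hforms x y

lemma fderiv_mem_symTraceless (hcurl : curl3 v p = 0) (hdiv : div3 v p = 0) :
    fderiv ℝ v p ∈ symTraceless E3 :=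
  ⟨isSymmetric_fderiv_of_curl3_eq_zero hcurl, (trace_fderiv_eq_div3 v p).trans hdiv⟩

end E3DivCurl

/-! ### The interior field -/

section Interior

variable {E : Type*} [NormedAddCommGroup E] [InnerProductSpace ℝ E] [FiniteDimensional ℝ E]
  {Ω : Set E} {x : E}

lemma infDist_frontier_le_infDist_compl (hx : x ∈ Ω) (hΩ' : Ω ≠ univ) :
    Metric.infDist x (frontier Ω) ≤ Metric.infDist x Ωᶜ := by
  obtain ⟨y, hy, hxy⟩ := exists_mem_frontier_infDist_compl_eq_dist hx hΩ'
  exact hxy ▸ Metric.infDist_le_dist_of_mem hy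

lemma norm_sub_gradient_eq (g : E → ℝ) (w x : E) :
    ‖w - gradient g x‖ = ‖fderiv ℝ g x - innerSL ℝ w‖ := by
  rw [norm_sub_rev, ← (InnerProductSpace.toDual ℝ E).norm_map, map_sub, gradient,
    LinearIsometryEquiv.apply_symm_apply]
  rfl

end Interior

section E3Interior

variable {Ω W : Set E3} {v : E3 → E3} {K : NNReal}

lemma exists_lipschitzWith_norm_sub_gradient_le (hb : Bornology.IsBounded Ω) (hΩ' : Ω ≠ univ)
    (hS : IsSurface 2 (frontier Ω)) (h : frontier Ω ≃ₜ Metric.sphere (0 : E3) 1)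
    (hv : Differentiable ℝ v) (hK : LipschitzWith K v)
    (hsymm : ∀ p ∈ frontier Ω, (fderiv ℝ v p : E3 →ₗ[ℝ] E3).IsSymmetric) :
    ∃ (g : E3 → ℝ) (A : NNReal) (C : ℝ), LipschitzWith A g ∧ 0 ≤ C ∧
      ∀ᵐ x, x ∈ Ω → ‖v x - gradient g x‖ ≤ C * Metric.infDist x Ωᶜ := by
  obtain ⟨F, hF⟩ := hS.exists_isWhitneyJetOn h hv hK hsymm
  obtain ⟨R, hR⟩ := hb.subset_ball 0
  obtain ⟨g, A, C, hg, hgC⟩ := hF.exists_lipschitzWith (isCompact_of_homeomorph_sphere h)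
    (nonempty_of_homeomorph_sphere h) hK R
  refine ⟨g, A, |C|, hg, abs_nonneg C, ?_⟩
  filter_upwards [hg.ae_differentiableAt (μ := volume)] with x hgx hx
  calc ‖v x - gradient g x‖ = ‖fderiv ℝ g x - innerSL ℝ (v x)‖ := norm_sub_gradient_eq g (v x) x
    _ ≤ C * Metric.infDist x (frontier Ω) := hgC x (hR hx) hgx
    _ ≤ |C| * Metric.infDist x Ωᶜ := by
        gcongr
        · exact Metric.infDist_nonneg
        · exact le_abs_self C
        · exact infDist_frontier_le_infDist_compl hx hΩ'

theorem eqOn_zero_of_tangent_of_fderiv_mem_symTraceless (hΩ : IsOpen Ω)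
    (hb : Bornology.IsBounded Ω) (hS : IsSurface 2 (frontier Ω))
    (h : frontier Ω ≃ₜ Metric.sphere (0 : E3) 1) (hW : IsOpen W) (hΩW : closure Ω ⊆ W)
    (hv : ContDiffOn ℝ 1 v W) (ht : ∀ p ∈ frontier Ω, IsTangentAt (frontier Ω) p (v p))
    (hd : ∀ p ∈ Ω, fderiv ℝ v p ∈ symTraceless E3) : EqOn v 0 Ω := by
  obtain ⟨w, hw, hwc, hwv⟩ :=
    exists_contDiff_hasCompactSupport_eventuallyEq hb.isCompact_closure hW hΩW hv
  obtain ⟨L, hL⟩ := hw.lipschitzWith_of_hasCompactSupport hwc one_ne_zero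
  have hΩ' : Ω ≠ univ := by
    rintro rfl
    simpa using nonempty_of_homeomorph_sphere h
  have hwd : ∀ p ∈ Ω, fderiv ℝ w p ∈ symTraceless E3 := fun p hp => by
    simpa only [(hwv p (subset_closure hp)).fderiv_eq] using hd p hp
  have hw_tangent : ∀ p ∈ frontier Ω, IsTangentAt (frontier Ω) p (w p) := fun p hp =>
    (hwv p (frontier_subset_closure hp)).eq_of_nhds ▸ ht p hp
  have hwd_frontier : ∀ p ∈ frontier Ω, fderiv ℝ w p ∈ symTraceless E3 := fun p hp =>
    fderiv_mem_of_mem_closure isOpen_univ hw.contDiffOn isClosed_symTraceless hwd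
      (frontier_subset_closure hp) (mem_univ p)
  obtain ⟨F, A, C, hF, hC, hFC⟩ := exists_lipschitzWith_norm_sub_gradient_le hb hΩ' hS h
    (hw.differentiable one_ne_zero) hL fun p hp => (hwd_frontier p hp).1
  have hsol : IsWeaklySolenoidalOn w Ω := isWeaklySolenoidalOn_of_trace_eq_zero hΩ hΩ' hb hL
    (fun x hx => abs_fderiv_infDist_compl_le hΩ hΩ' hL hw_tangent hx) fun x hx => (hwd x hx).2
  have hirr : IsWeaklyIrrotationalOn (fun x => w x - gradient F x) Ω :=
    isWeaklyIrrotationalOn_sub_gradient hΩ hΩ' hb hL (fun x hx => (hwd x hx).1) hF hC hFC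
  have hw_zero : EqOn w 0 Ω :=
    eqOn_zero_of_isWeaklyIrrotationalOn_sub_gradient hΩ hb hw.continuous hsol hF hirr
  exact fun p hp => (hwv p (subset_closure hp)).eq_of_nhds ▸ hw_zero hp

end E3Interior

/-! ### The exterior field on the surface -/

section ExtensionByZero

variable {E F : Type*} [NormedAddCommGroup E] [NormedSpace ℝ E] [NormedAddCommGroup F]
  [NormedSpace ℝ F] {v : E → F} {Ω W : Set E}

lemma hasFDerivAt_indicator (hΩ : IsOpen Ω) (hv : ∀ p ∈ closure Ω, DifferentiableAt ℝ v p)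
    (h0 : EqOn v 0 (frontier Ω)) (h1 : EqOn (fderiv ℝ v) 0 (frontier Ω)) (p : E) :
    HasFDerivAt (Ω.indicator v) (Ω.indicator (fderiv ℝ v) p) p := by
  by_cases hpΩ : p ∈ Ω
  · rw [indicator_of_mem hpΩ]
    exact (hv p (subset_closure hpΩ)).hasFDerivAt.congr_of_eventuallyEq
      ((eqOn_indicator (s := Ω)).eventuallyEq_of_mem (hΩ.mem_nhds hpΩ))
  rw [indicator_of_notMem hpΩ]
  by_cases hp : p ∈ closure Ω
  · have hpf : p ∈ frontier Ω := hΩ.frontier_eq ▸ ⟨hp, hpΩ⟩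
    have hvp := (hv p hp).hasFDerivAt
    rw [h1 hpf, Pi.zero_apply, hasFDerivAt_iff_isLittleO] at hvp
    rw [hasFDerivAt_iff_isLittleO]
    refine (Asymptotics.isBigO_of_le _ fun q => ?_).trans_isLittleO hvp
    simpa [hpΩ, h0 hpf] using norm_indicator_le_norm_self v q
  · refine (hasFDerivAt_const (0 : F) p).congr_of_eventuallyEq ?_
    filter_upwards [isClosed_closure.isOpen_compl.mem_nhds hp] with q hq
    exact indicator_of_notMem (fun hqΩ => hq (subset_closure hqΩ)) v

lemma contDiff_indicator (hΩ : IsOpen Ω) (hW : IsOpen W) (hΩW : closure Ω ⊆ W)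
    (hv : ContDiffOn ℝ 1 v W) (h0 : EqOn v 0 (frontier Ω))
    (h1 : EqOn (fderiv ℝ v) 0 (frontier Ω)) : ContDiff ℝ 1 (Ω.indicator v) := by
  have hd := hasFDerivAt_indicator hΩ (fun p hp =>
    (hv.contDiffAt (hW.mem_nhds (hΩW hp))).differentiableAt one_ne_zero) h0 h1
  rw [contDiff_one_iff_fderiv, funext fun p => (hd p).fderiv]
  exact ⟨fun p => (hd p).differentiableAt, continuous_indicator (fun p hp => h1 hp)
    ((hv.continuousOn_fderiv_of_isOpen hW le_rfl).mono hΩW)⟩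

end ExtensionByZero

section Surface

variable {S : Set E3} {v : E3 → E3} {p u : E3}

lemma IsTangentAt.fderiv_apply_eq_zero_of_isExtrOn {Φ : E3 → ℝ} (hu : IsTangentAt S p u)
    (hΦ : DifferentiableAt ℝ Φ p) (hp : IsExtrOn Φ S p) : fderiv ℝ Φ p u = 0 := by
  obtain ⟨γ, hγS, rfl, hγ⟩ := hu
  have hextr : IsLocalExtr (Φ ∘ γ) 0 := by
    refine IsExtrFilter.filter_mono (l := 𝓟 univ) ?_ (by simp)
    exact hp.elim (fun h => .inl fun t _ => h (hγS t)) fun h => .inr fun t _ => h (hγS t)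
  exact hextr.hasDerivAt_eq_zero (hΦ.hasFDerivAt.comp_hasDerivAt 0 hγ)

/-- The derivative of `q ↦ ⟪v q, q⟫` along `v` is `‖v‖ ^ 2`, so `v` vanishes at the extrema of this
function, which is therefore constant: every point is an extremum. -/
lemma eqOn_zero_of_tangent_of_fderiv_apply_self_eq_zero (hS : IsCompact S)
    (hv : ∀ p ∈ S, DifferentiableAt ℝ v p) (ht : ∀ p ∈ S, IsTangentAt S p (v p))
    (hd : ∀ p ∈ S, fderiv ℝ v p (v p) = 0) : EqOn v 0 S := by
  set Φ : E3 → ℝ := fun q => ⟪v q, q⟫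
  have hΦ : ∀ q ∈ S, DifferentiableAt ℝ Φ q := fun q hq => (hv q hq).inner ℝ differentiableAt_id
  have hextr : ∀ q ∈ S, IsExtrOn Φ S q → v q = 0 := fun q hq hq' => by
    have hΦd : fderiv ℝ Φ q (v q) = ‖v q‖ ^ 2 :=
      (fderiv_inner_apply ℝ (hv q hq) differentiableAt_id (v q)).trans (by simp [hd q hq])
    simpa [hΦd] using (ht q hq).fderiv_apply_eq_zero_of_isExtrOn (hΦ q hq) hq'
  intro p hp
  have hcont : ContinuousOn Φ S := fun q hq => (hΦ q hq).continuousAt.continuousWithinAt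
  obtain ⟨a, ha, hmax⟩ := hS.exists_isMaxOn ⟨p, hp⟩ hcont
  obtain ⟨b, hb, hmin⟩ := hS.exists_isMinOn ⟨p, hp⟩ hcont
  have hΦa : Φ a = 0 := by simp [Φ, hextr a ha hmax.isExtr]
  have hΦb : Φ b = 0 := by simp [Φ, hextr b hb hmin.isExtr]
  have hΦ0 : ∀ q ∈ S, Φ q = 0 := fun q hq =>
    le_antisymm (hΦa ▸ hmax hq) (hΦb ▸ hmin hq)
  exact hextr p hp (.inl fun q hq => (hΦ0 p hp).trans_le (hΦ0 q hq).ge)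

lemma IsSurface.fderiv_eq_zero {k : ℕ∞} (hS : IsSurface k S) (hk : k ≠ 0) (hp : p ∈ S)
    (hv : DifferentiableAt ℝ v p) (h0 : EqOn v 0 S) (hd : fderiv ℝ v p ∈ symTraceless E3) :
    fderiv ℝ v p = 0 := by
  obtain ⟨f, U, V, hU, -, hpV, hf, -, hfU, hinj⟩ := hS p hp
  obtain ⟨x, hx, rfl⟩ : p ∈ f '' U := hfU ▸ ⟨hp, hpV⟩
  have hfx : DifferentiableAt ℝ f x :=
    (hf.contDiffAt (hU.mem_nhds hx)).differentiableAt (mod_cast hk)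
  have hvf : v ∘ f =ᶠ[𝓝 x] fun _ => 0 := by
    filter_upwards [hU.mem_nhds hx] with y hy
    exact h0 (hfU.subset (mem_image_of_mem f hy)).1
  have hcomp : (fderiv ℝ v (f x)).comp (fderiv ℝ f x) = 0 :=
    (hv.hasFDerivAt.comp x hfx.hasFDerivAt).unique
      ((hasFDerivAt_const (0 : E3) x).congr_of_eventuallyEq hvf)
  have hker : (fderiv ℝ f x : E2 →ₗ[ℝ] E3).range ≤ (fderiv ℝ v (f x) : E3 →ₗ[ℝ] E3).ker := by
    rintro _ ⟨y, rfl⟩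
    exact congr($hcomp y)
  refine eq_zero_of_mem_symTraceless_of_finrank_range_le_one hd ?_
  have hrank := LinearMap.finrank_range_of_inj (f := (fderiv ℝ f x : E2 →ₗ[ℝ] E3)) (hinj x hx)
  have hle := Submodule.finrank_mono hker
  have hsum := LinearMap.finrank_range_add_finrank_ker (fderiv ℝ v (f x) : E3 →ₗ[ℝ] E3)
  simp only [finrank_euclideanSpace, Fintype.card_fin] at hrank hsum
  linarith

end Surface

/-! ### Moments determine a compactly supported function -/

lemma integral_mul_exp_eq_zero_of_integral_mul_pow {α : Type*} [MeasurableSpace α] {μ : Measure α}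
    {f h : α → ℂ} {M : ℝ} (hf : Integrable f μ) (hh : AEStronglyMeasurable h μ)
    (hM : ∀ x, f x ≠ 0 → ‖h x‖ ≤ M) (hmom : ∀ k : ℕ, ∫ x, f x * h x ^ k ∂μ = 0) :
    ∫ x, f x * Complex.exp (h x) ∂μ = 0 := by
  have hmeas (k : ℕ) : AEStronglyMeasurable (fun x => f x * (h x ^ k / k.factorial)) μ :=
    hf.1.mul (((continuous_pow k).div_const _).comp_aestronglyMeasurable hh)
  have hbound (k : ℕ) (x : α) :
      ‖f x * (h x ^ k / k.factorial)‖ ≤ ‖f x‖ * (M ^ k / k.factorial) := by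
    rw [norm_mul, norm_div, norm_pow, Complex.norm_natCast]
    by_cases hx : f x = 0
    · simp [hx]
    · gcongr
      exact hM x hx
  have hsum := hasSum_integral_of_dominated_convergence
    (fun (k : ℕ) x => ‖f x‖ * (M ^ k / k.factorial)) hmeas (fun k => .of_forall (hbound k))
    (.of_forall fun x => (Real.summable_pow_div_factorial M).mul_left _)
    (by simpa only [tsum_mul_left] using hf.norm.mul_const _)
    (.of_forall fun x => (Complex.exp_eq_exp_ℂ ▸
      NormedSpace.expSeries_div_hasSum_exp (h x)).mul_left (f x))
  have hterm (k : ℕ) : ∫ x, f x * (h x ^ k / k.factorial) ∂μ = 0 := by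
    simp only [← mul_div_assoc, integral_div, hmom k, zero_div]
  simp only [hterm] at hsum
  exact hsum.unique hasSum_zero

section Euclidean

variable {E : Type*} [NormedAddCommGroup E] [InnerProductSpace ℝ E] [FiniteDimensional ℝ E]
  [MeasurableSpace E] [BorelSpace E]

open scoped FourierTransform in
lemma eq_zero_of_forall_integral_mul_inner_pow_eq_zero {f : E → ℝ} (hf : Continuous f)
    (hfc : HasCompactSupport f) (hmom : ∀ (c : E) (k : ℕ), ∫ x, f x * ⟪c, x⟫ ^ k = 0) : f = 0 := by
  set g : E → ℂ := fun x => f x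
  have hg : Continuous g := Complex.continuous_ofReal.comp hf
  have hgc : HasCompactSupport g := hfc.comp_left Complex.ofReal_zero
  have hgi : Integrable g := hg.integrable_of_hasCompactSupport hgc
  have hfourier : 𝓕 g = 0 := by
    funext w
    set h : E → ℂ := fun x => -2 * Real.pi * Complex.I * (⟪w, x⟫ : ℝ)
    have hh : Continuous h := by fun_prop
    obtain ⟨M, hM⟩ := hfc.isCompact.exists_bound_of_continuousOn hh.continuousOn
    have hmom_h (k : ℕ) : ∫ x, g x * h x ^ k = 0 := by
      calc ∫ x, g x * h x ^ k
          = ∫ x, (-2 * Real.pi * Complex.I) ^ k * ((f x * ⟪w, x⟫ ^ k : ℝ) : ℂ) := by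
            congr 1 with x
            simp only [g, h, mul_pow]
            push_cast
            ring
        _ = 0 := by rw [integral_const_mul, integral_complex_ofReal, hmom w k]; simp
    have hexp := integral_mul_exp_eq_zero_of_integral_mul_pow hgi hh.aestronglyMeasurable
      (fun x hx => hM x (subset_tsupport f fun hfx => hx (by simp [g, hfx]))) hmom_h
    rw [Real.fourier_eq', Pi.zero_apply, ← hexp]
    congr 1 with x
    simp only [h, smul_eq_mul, real_inner_comm w x]
    push_cast
    ring_nf
  have hinv := hg.fourierInv_fourier_eq hgi (hfourier ▸ integrable_zero _ _ _)
  funext x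
  have hgx : g x = 0 := by rw [← hinv, hfourier, Real.fourierInv_eq']; simp
  exact Complex.ofReal_eq_zero.1 hgx

end Euclidean

/-! ### Moments of a harmonic function vanishing near the origin -/

section LinearODE

lemma contDiff_one_of_hasDerivAt {f f' : ℝ → ℝ} (hf : ∀ s, HasDerivAt f (f' s) s)
    (hf' : Continuous f') : ContDiff ℝ 1 f :=
  contDiff_one_iff_deriv.2
    ⟨fun s => (hf s).differentiableAt, by rwa [funext fun s => (hf s).deriv]⟩

lemma exists_hasDerivAt_eq_zero_of_le {f : ℝ → ℝ} {R : ℝ} (hf : Continuous f)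
    (hfR : ∀ s, R ≤ s → f s = 0) :
    ∃ F : ℝ → ℝ, (∀ s, HasDerivAt F (f s) s) ∧ ∀ s, R ≤ s → F s = 0 := by
  refine ⟨fun s => ∫ t in R..s, f t, fun s => (hf.integral_hasStrictDerivAt R s).hasDerivAt,
    fun s hs => intervalIntegral.integral_zero_ae (.of_forall fun t ht => hfR t ?_)⟩
  rw [uIoc_of_le hs] at ht
  exact ht.1.le

lemma exists_hasDerivAt_sub_mul_eq_zero_of_le {c f : ℝ → ℝ} {R : ℝ} (hc : Continuous c)
    (hf : Continuous f) (hfR : ∀ s, R ≤ s → f s = 0) :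
    ∃ p : ℝ → ℝ, (∀ s, HasDerivAt p (f s - c s * p s) s) ∧ ∀ s, R ≤ s → p s = 0 := by
  set m : ℝ → ℝ := fun s => ∫ t in (0 : ℝ)..s, c t
  have hm (s : ℝ) : HasDerivAt m (c s) s := (hc.integral_hasStrictDerivAt 0 s).hasDerivAt
  have hmc : Continuous m := continuous_iff_continuousAt.2 fun s => (hm s).continuousAt
  obtain ⟨P, hP, hPR⟩ := exists_hasDerivAt_eq_zero_of_le (f := fun s => Real.exp (m s) * f s)
    (R := R) (hmc.rexp.mul hf) fun s hs => by simp [hfR s hs]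
  refine ⟨fun s => Real.exp (-m s) * P s, fun s => ?_, fun s hs => by simp [hPR s hs]⟩
  refine ((hm s).neg.exp.mul (hP s)).congr_deriv ?_
  have hexp : Real.exp (-m s) * Real.exp (m s) = 1 := by rw [← Real.exp_add]; simp
  linear_combination f s * hexp

lemma exists_hasDerivAt_four_mul_add_mul_eq (α : ℝ) {δ R : ℝ} (hδ : 0 < δ) {b : ℝ → ℝ}
    (hb : Continuous b) (hbR : ∀ s, R ≤ s → b s = 0) :
    ∃ a p q : ℝ → ℝ, (∀ s, HasDerivAt a (p s) s) ∧ (∀ s, HasDerivAt p (q s) s) ∧ Continuous q ∧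
      (∀ s, R ≤ s → a s = 0 ∧ p s = 0) ∧ ∀ s, δ ≤ s → 4 * s * q s + α * p s = b s := by
  set κ : ℝ → ℝ := fun s => 4 * max s δ
  have hκ : Continuous κ := by fun_prop
  have hκ0 (s : ℝ) : κ s ≠ 0 := by positivity
  have hα : Continuous fun s => α / κ s := continuous_const.div hκ hκ0
  have hbκ : Continuous fun s => b s / κ s := hb.div hκ hκ0
  obtain ⟨p, hp, hpR⟩ := exists_hasDerivAt_sub_mul_eq_zero_of_le hα hbκ
    fun s hs => by simp [hbR s hs]
  have hpc : Continuous p := continuous_iff_continuousAt.2 fun s => (hp s).continuousAt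
  obtain ⟨a, ha, haR⟩ := exists_hasDerivAt_eq_zero_of_le hpc hpR
  refine ⟨a, p, fun s => b s / κ s - α / κ s * p s, ha, hp, hbκ.sub (hα.mul hpc),
    fun s hs => ⟨haR s hs, hpR s hs⟩, fun s hs => ?_⟩
  have hκs : κ s = 4 * s := by simp [κ, hs]
  have hs0 : s ≠ 0 := (hδ.trans_le hs).ne'
  beta_reduce
  rw [hκs]
  field_simp
  ring

end LinearODE

section Moments

variable {E : Type*} [NormedAddCommGroup E] [InnerProductSpace ℝ E] {a p q : ℝ → ℝ} {x : E}

/-- The gradient of `x ↦ ⟪c, x⟫ ^ k * a (‖x‖ ^ 2)`, where `p` stands for the derivative of `a`. -/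
def momentGradient (c : E) (k : ℕ) (a p : ℝ → ℝ) (x : E) : E :=
  (k * (⟪c, x⟫ ^ (k - 1) * a (‖x‖ ^ 2))) • c + (2 * (⟪c, x⟫ ^ k * p (‖x‖ ^ 2))) • x

lemma hasFDerivAt_inner_pow_mul_norm_sq (ha : HasDerivAt a (p (‖x‖ ^ 2)) (‖x‖ ^ 2)) (c : E)
    (k : ℕ) :
    HasFDerivAt (fun y => ⟪c, y⟫ ^ k * a (‖y‖ ^ 2)) (innerSL ℝ (momentGradient c k a p x)) x := by
  have hinner : HasFDerivAt (fun y => ⟪c, y⟫ ^ k) ((k * ⟪c, x⟫ ^ (k - 1)) • innerSL ℝ c) x :=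
    (hasDerivAt_pow k ⟪c, x⟫).comp_hasFDerivAt x (innerSL ℝ c).hasFDerivAt
  have hnorm : HasFDerivAt (fun y : E => a (‖y‖ ^ 2)) (p (‖x‖ ^ 2) • (2 • innerSL ℝ x)) x :=
    ha.comp_hasFDerivAt x (hasStrictFDerivAt_norm_sq x).hasFDerivAt
  refine (hinner.mul hnorm).congr_fderiv ?_
  ext y
  simp [momentGradient]
  ring

lemma contDiff_momentGradient (ha : ContDiff ℝ 1 a) (hp : ContDiff ℝ 1 p) (c : E) (k : ℕ) :
    ContDiff ℝ 1 (momentGradient c k a p) := by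
  have hinner (j : ℕ) : ContDiff ℝ 1 fun x : E => ⟪c, x⟫ ^ j := (innerSL ℝ c).contDiff.pow j
  have hcomp {f : ℝ → ℝ} (hf : ContDiff ℝ 1 f) : ContDiff ℝ 1 fun x : E => f (‖x‖ ^ 2) :=
    hf.comp (contDiff_norm_sq ℝ)
  exact ((contDiff_const.mul ((hinner _).mul (hcomp ha))).smul contDiff_const).add
    ((contDiff_const.mul ((hinner _).mul (hcomp hp))).smul contDiff_id)

variable [FiniteDimensional ℝ E]

lemma trace_fderiv_smul_const_add_smul_id {f g : E → ℝ} {f' g' : E →L[ℝ] ℝ}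
    (hf : HasFDerivAt f f' x) (hg : HasFDerivAt g g' x) (c : E) :
    LinearMap.trace ℝ E (fderiv ℝ (fun y => f y • c + g y • y) x) =
      f' c + g' x + Module.finrank ℝ E * g x := by
  have hd : HasFDerivAt (fun y => f y • c + g y • y) _ x :=
    (hf.smul_const c).add (hg.smul (hasFDerivAt_id x))
  rw [hd.fderiv]
  simp
  ring

lemma trace_fderiv_momentGradient (ha : HasDerivAt a (p (‖x‖ ^ 2)) (‖x‖ ^ 2))
    (hp : HasDerivAt p (q (‖x‖ ^ 2)) (‖x‖ ^ 2)) (c : E) (k : ℕ) :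
    LinearMap.trace ℝ E (fderiv ℝ (momentGradient c k a p) x) =
      (k * (k - 1 : ℕ) * ‖c‖ ^ 2) * (⟪c, x⟫ ^ (k - 2) * a (‖x‖ ^ 2)) + ⟪c, x⟫ ^ k *
        (4 * ‖x‖ ^ 2 * q (‖x‖ ^ 2) + (4 * k + 2 * Module.finrank ℝ E) * p (‖x‖ ^ 2)) := by
  have hpow : (k : ℝ) * (⟪c, x⟫ ^ (k - 1) * ⟪c, x⟫) = k * ⟪c, x⟫ ^ k := by
    rcases Nat.eq_zero_or_pos k with rfl | hk
    · simp
    · rw [← pow_succ, Nat.sub_add_cancel hk]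
  have htrace := trace_fderiv_smul_const_add_smul_id
    ((hasFDerivAt_inner_pow_mul_norm_sq ha c (k - 1)).const_mul (k : ℝ))
    ((hasFDerivAt_inner_pow_mul_norm_sq hp c k).const_mul 2) c
  refine htrace.trans ?_
  simp only [momentGradient, smul_apply, innerSL_apply_apply, inner_add_left, inner_smul_left,
    conj_trivial, real_inner_self_eq_norm_sq, real_inner_comm c x, smul_eq_mul, Nat.sub_sub]
  linear_combination (4 * p (‖x‖ ^ 2)) * hpow

end Moments

/-! ### Unique continuation -/

section UniqueContinuation

variable {E : Type*} [NormedAddCommGroup E] [InnerProductSpace ℝ E] {u η : E → ℝ} {w X : E → E}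

lemma contDiff_one_of_hasFDerivAt_innerSL (hu : ∀ x, HasFDerivAt u (innerSL ℝ (w x)) x)
    (hw : Continuous w) : ContDiff ℝ 1 u :=
  contDiff_one_iff_hasFDerivAt.2 ⟨_, (innerSL ℝ).continuous.comp hw, hu⟩

lemma hasCompactSupport_of_hasFDerivAt_innerSL (hη : ∀ x, HasFDerivAt η (innerSL ℝ (X x)) x)
    (hηc : HasCompactSupport η) : HasCompactSupport X := by
  refine .intro hηc fun x hx => (innerSL_inj (𝕜 := ℝ)).1 ?_
  rw [← (hη x).fderiv, fderiv_of_notMem_tsupport ℝ hx, map_zero]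

variable [FiniteDimensional ℝ E]

lemma hasCompactSupport_of_forall_le_norm_sq {F : Type*} [Zero F] {f : E → F} (R : ℝ)
    (hf : ∀ x, R ≤ ‖x‖ ^ 2 → f x = 0) : HasCompactSupport f := by
  refine .intro (isCompact_closedBall 0 (|R| + 1)) fun x hx => hf x ?_
  rw [mem_closedBall_zero_iff, not_le] at hx
  nlinarith [le_abs_self R, abs_nonneg R]

variable [MeasurableSpace E] [BorelSpace E]

lemma integral_fderiv_apply_eq_neg_integral_trace_mul_of_contDiff (hu : ContDiff ℝ 1 u)
    (hX : ContDiff ℝ 1 X) (hc : HasCompactSupport u ∨ HasCompactSupport X) :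
    ∫ x, fderiv ℝ u x (X x) = -∫ x, LinearMap.trace ℝ E (fderiv ℝ X x) * u x := by
  rcases hc with huc | hXc
  · obtain ⟨Y, hY, hYc, hYX⟩ := exists_contDiff_hasCompactSupport_eventuallyEq (n := 1) huc
      isOpen_univ (subset_univ _) hX.contDiffOn
    obtain ⟨L, hL⟩ := hY.lipschitzWith_of_hasCompactSupport hYc one_ne_zero
    obtain ⟨K, hK⟩ := hu.lipschitzWith_of_hasCompactSupport huc one_ne_zero
    convert integral_fderiv_apply_eq_neg_integral_trace_mul hL hK huc using 3 with x
    · by_cases hx : x ∈ tsupport u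
      · rw [(hYX x hx).eq_of_nhds]
      · simp [fderiv_of_notMem_tsupport ℝ hx]
    · funext x
      by_cases hx : x ∈ tsupport u
      · rw [(hYX x hx).fderiv_eq]
      · simp [image_eq_zero_of_notMem_tsupport hx]
  · obtain ⟨f, hf, hfc, hfu⟩ := exists_contDiff_hasCompactSupport_eventuallyEq (n := 1) hXc
      isOpen_univ (subset_univ _) hu.contDiffOn
    obtain ⟨L, hL⟩ := hX.lipschitzWith_of_hasCompactSupport hXc one_ne_zero
    obtain ⟨K, hK⟩ := hf.lipschitzWith_of_hasCompactSupport hfc one_ne_zero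
    convert integral_fderiv_apply_eq_neg_integral_trace_mul hL hK hfc using 3 with x
    · by_cases hx : x ∈ tsupport X
      · rw [(hfu x hx).fderiv_eq]
      · simp [image_eq_zero_of_notMem_tsupport hx]
    · funext x
      by_cases hx : x ∈ tsupport X
      · rw [(hfu x hx).eq_of_nhds]
      · simp [fderiv_of_notMem_tsupport ℝ hx]

/-- Green's second identity for the harmonic function `u` and the test function `η`. -/
lemma integral_trace_fderiv_mul_eq_zero (hu : ∀ x, HasFDerivAt u (innerSL ℝ (w x)) x)
    (hw : ContDiff ℝ 1 w) (hdiv : ∀ x, LinearMap.trace ℝ E (fderiv ℝ w x) = 0)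
    (hη : ∀ x, HasFDerivAt η (innerSL ℝ (X x)) x) (hX : ContDiff ℝ 1 X)
    (hηc : HasCompactSupport η) : ∫ x, LinearMap.trace ℝ E (fderiv ℝ X x) * u x = 0 := by
  have huX := integral_fderiv_apply_eq_neg_integral_trace_mul_of_contDiff
    (contDiff_one_of_hasFDerivAt_innerSL hu hw.continuous) hX
    (.inr (hasCompactSupport_of_hasFDerivAt_innerSL hη hηc))
  have hηw := integral_fderiv_apply_eq_neg_integral_trace_mul_of_contDiff
    (contDiff_one_of_hasFDerivAt_innerSL hη hX.continuous) hw (.inl hηc)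
  have hcomm : ∀ x, fderiv ℝ u x (X x) = fderiv ℝ η x (w x) := fun x => by
    rw [(hu x).fderiv, (hη x).fderiv, innerSL_apply_apply, innerSL_apply_apply, real_inner_comm]
  simp only [hcomm, hηw, hdiv, zero_mul, integral_zero, neg_zero] at huX
  exact neg_eq_zero.1 huX.symm

/-- Test the harmonic function `u` against `⟪c, x⟫ ^ k * a (‖x‖ ^ 2)`. -/
lemma integral_mul_inner_pow_mul_eq_zero_of_ode {a p q b : ℝ → ℝ} {δ R : ℝ} {k : ℕ}
    (hu : ∀ x, HasFDerivAt u (innerSL ℝ (w x)) x)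
    (hw : ContDiff ℝ 1 w) (hdiv : ∀ x, LinearMap.trace ℝ E (fderiv ℝ w x) = 0)
    (hu0 : ∀ x, ‖x‖ ^ 2 < δ → u x = 0) (ha : ∀ s, HasDerivAt a (p s) s)
    (hp : ∀ s, HasDerivAt p (q s) s) (hq : Continuous q) (hb : Continuous b)
    (haR : ∀ s, R ≤ s → a s = 0) (hbR : ∀ s, R ≤ s → b s = 0)
    (hode : ∀ s, δ ≤ s → 4 * s * q s + (4 * k + 2 * Module.finrank ℝ E) * p s = b s) (c : E) :
    (k * (k - 1 : ℕ) * ‖c‖ ^ 2) * (∫ x, u x * (⟪c, x⟫ ^ (k - 2) * a (‖x‖ ^ 2))) +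
      ∫ x, u x * (⟪c, x⟫ ^ k * b (‖x‖ ^ 2)) = 0 := by
  have hp_cont : Continuous p := continuous_iff_continuousAt.2 fun s => (hp s).continuousAt
  have ha_cont : Continuous a := continuous_iff_continuousAt.2 fun s => (ha s).continuousAt
  have hu_cont : Continuous u := continuous_iff_continuousAt.2 fun x => (hu x).continuousAt
  have hinteg {f : ℝ → ℝ} (hf : Continuous f) (hfR : ∀ s, R ≤ s → f s = 0) (j : ℕ) :
      Integrable fun x => u x * (⟪c, x⟫ ^ j * f (‖x‖ ^ 2)) :=
    Continuous.integrable_of_hasCompactSupport (by fun_prop)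
      (hasCompactSupport_of_forall_le_norm_sq R fun x hx => by simp [hfR _ hx])
  have hgreen := integral_trace_fderiv_mul_eq_zero hu hw hdiv
    (fun x => hasFDerivAt_inner_pow_mul_norm_sq (ha _) c k)
    (contDiff_momentGradient (contDiff_one_of_hasDerivAt ha hp_cont)
      (contDiff_one_of_hasDerivAt hp hq) c k)
    (hasCompactSupport_of_forall_le_norm_sq R fun x hx => by simp [haR _ hx])
  rw [← integral_const_mul, ← integral_add ((hinteg ha_cont haR _).const_mul _) (hinteg hb hbR k),
    ← hgreen]
  congr 1 with x
  by_cases hx : ‖x‖ ^ 2 < δ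
  · simp [hu0 x hx]
  · rw [trace_fderiv_momentGradient (ha _) (hp _), hode _ (not_lt.1 hx)]
    ring

/-- Adding a multiple of a lower moment, the test function can be chosen so that its Laplacian is
`⟪c, x⟫ ^ k * b (‖x‖ ^ 2)` away from the origin. -/
lemma integral_mul_inner_pow_mul_eq_zero {δ : ℝ} (hδ : 0 < δ)
    (hu : ∀ x, HasFDerivAt u (innerSL ℝ (w x)) x) (hw : ContDiff ℝ 1 w)
    (hdiv : ∀ x, LinearMap.trace ℝ E (fderiv ℝ w x) = 0)
    (hu0 : ∀ x, ‖x‖ ^ 2 < δ → u x = 0) (c : E) (R : ℝ) (k : ℕ) {b : ℝ → ℝ} (hb : Continuous b)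
    (hbR : ∀ s, R ≤ s → b s = 0) : ∫ x, u x * (⟪c, x⟫ ^ k * b (‖x‖ ^ 2)) = 0 := by
  induction k using Nat.strong_induction_on generalizing b with
  | _ k ih =>
  obtain ⟨a, p, q, ha, hp, hq, h0, hode⟩ :=
    exists_hasDerivAt_four_mul_add_mul_eq (4 * k + 2 * Module.finrank ℝ E) hδ hb hbR
  have hsum := integral_mul_inner_pow_mul_eq_zero_of_ode hu hw hdiv hu0 ha hp hq hb
    (fun s hs => (h0 s hs).1) hbR hode c
  have hlower : (k * (k - 1 : ℕ) * ‖c‖ ^ 2) * ∫ x, u x * (⟪c, x⟫ ^ (k - 2) * a (‖x‖ ^ 2)) = 0 := by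
    match k, ih with
    | 0, _ => simp
    | 1, _ => simp
    | k + 2, ih =>
      rw [Nat.add_sub_cancel, ih k (by omega)
        (continuous_iff_continuousAt.2 fun s => (ha s).continuousAt) fun s hs => (h0 s hs).1,
        mul_zero]
  rwa [hlower, zero_add] at hsum

lemma eq_zero_of_hasFDerivAt_innerSL_of_eventuallyEq_zero
    (hu : ∀ x, HasFDerivAt u (innerSL ℝ (w x)) x) (hw : ContDiff ℝ 1 w)
    (hdiv : ∀ x, LinearMap.trace ℝ E (fderiv ℝ w x) = 0) (hu0 : u =ᶠ[𝓝 0] 0) : u = 0 := by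
  obtain ⟨ρ, hρ, hball⟩ := Metric.eventually_nhds_iff_ball.1 hu0
  have hu_zero : ∀ x, ‖x‖ ^ 2 < ρ ^ 2 → u x = 0 := fun x hx =>
    hball x (mem_ball_zero_iff.2 (lt_of_pow_lt_pow_left₀ 2 hρ.le hx))
  have hu_cont : Continuous u := continuous_iff_continuousAt.2 fun x => (hu x).continuousAt
  funext x
  set b : ℝ → ℝ := fun s => max (‖x‖ ^ 2 + 1 - s) 0
  have hb : Continuous b := by fun_prop
  have hbR : ∀ s, ‖x‖ ^ 2 + 1 ≤ s → b s = 0 := fun s hs => max_eq_right (sub_nonpos.2 hs)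
  have hub : (fun y => u y * b (‖y‖ ^ 2)) = 0 :=
    eq_zero_of_forall_integral_mul_inner_pow_eq_zero (by fun_prop)
      (hasCompactSupport_of_forall_le_norm_sq (‖x‖ ^ 2 + 1) fun y hy => by simp [hbR _ hy])
      fun c k => by
        simpa only [mul_assoc, mul_comm (b _)] using
          integral_mul_inner_pow_mul_eq_zero (pow_pos hρ 2) hu hw hdiv hu_zero c _ k hb hbR
  simpa [b] using congrFun hub x

lemma eq_zero_of_fderiv_mem_symTraceless_of_eventuallyEq_zero {x₀ : E} (hw : ContDiff ℝ 1 w)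
    (hd : ∀ x, fderiv ℝ w x ∈ symTraceless E) (h0 : w =ᶠ[𝓝 x₀] 0) : w = 0 := by
  obtain ⟨G, hG⟩ := exists_hasFDerivAt_innerSL_comp_fderiv (f := id) isOpen_univ convex_univ
    contDiffOn_id (hw.differentiable one_ne_zero) fun x _ => (hd x).1
  simp only [mem_univ, id_eq, fderiv_id, ContinuousLinearMap.comp_id, forall_const] at hG
  set u : E → ℝ := fun x => G (x + x₀) - G x₀
  have hu : ∀ x, HasFDerivAt u (innerSL ℝ (w (x + x₀))) x := fun x =>
    ((hasFDerivAt_comp_add_right x₀).2 (hG (x + x₀))).sub_const _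
  have hdiv : ∀ x, LinearMap.trace ℝ E (fderiv ℝ (fun y => w (y + x₀)) x) = 0 := fun x => by
    rw [fderiv_comp_add_right]
    exact (hd _).2
  obtain ⟨ρ, hρ, hball⟩ := Metric.eventually_nhds_iff_ball.1 h0
  have hu_near : u =ᶠ[𝓝 0] 0 := by
    filter_upwards [Metric.ball_mem_nhds 0 hρ] with x hx
    have hux : u x = u 0 := Metric.isOpen_ball.is_const_of_fderiv_eq_zero (𝕜 := ℝ)
      (convex_ball 0 ρ).isPreconnected (fun y _ => (hu y).differentiableAt.differentiableWithinAt)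
      (fun y hy => by simp [(hu y).fderiv, hball (y + x₀) (by simpa using hy)])
      hx (Metric.mem_ball_self hρ)
    simpa [u] using hux
  have hu_zero : u = 0 := eq_zero_of_hasFDerivAt_innerSL_of_eventuallyEq_zero hu
    (hw.comp (contDiff_id.add contDiff_const)) hdiv hu_near
  funext x
  have hux := hu (x - x₀)
  rw [hu_zero, sub_add_cancel] at hux
  exact (innerSL_inj (𝕜 := ℝ)).1 ((hux.unique (hasFDerivAt_const 0 _)).trans (map_zero _).symm)

end UniqueContinuation

/-! ### The exterior field -/

section Exterior

variable {S Ω Ωm Ωp W : Set E3} {v vm vp : E3 → E3} {k : ℕ∞}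

theorem eqOn_zero_of_tangent_of_fderiv_apply_self_of_closure_ne_univ (hΩ : IsOpen Ω)
    (hΩ' : closure Ω ≠ univ) (hS : IsSurface k (frontier Ω)) (hk : k ≠ 0)
    (hcpt : IsCompact (frontier Ω)) (hW : IsOpen W) (hΩW : closure Ω ⊆ W)
    (hv : ContDiffOn ℝ 1 v W) (ht : ∀ p ∈ frontier Ω, IsTangentAt (frontier Ω) p (v p))
    (hself : ∀ p ∈ frontier Ω, fderiv ℝ v p (v p) = 0)
    (hd : ∀ p ∈ Ω, fderiv ℝ v p ∈ symTraceless E3) : EqOn v 0 Ω := by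
  have hvd : ∀ p ∈ closure Ω, DifferentiableAt ℝ v p := fun p hp =>
    (hv.contDiffAt (hW.mem_nhds (hΩW hp))).differentiableAt one_ne_zero
  have h0 : EqOn v 0 (frontier Ω) := eqOn_zero_of_tangent_of_fderiv_apply_self_eq_zero hcpt
    (fun p hp => hvd p (frontier_subset_closure hp)) ht hself
  have h1 : EqOn (fderiv ℝ v) 0 (frontier Ω) := fun p hp =>
    have hpΩ := frontier_subset_closure hp
    hS.fderiv_eq_zero hk hp (hvd p hpΩ) h0
      (fderiv_mem_of_mem_closure hW hv isClosed_symTraceless hd hpΩ (hΩW hpΩ))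
  obtain ⟨x₀, hx₀⟩ := (ne_univ_iff_exists_notMem _).1 hΩ'
  have hzero : Ω.indicator v = 0 := by
    refine eq_zero_of_fderiv_mem_symTraceless_of_eventuallyEq_zero (x₀ := x₀)
      (contDiff_indicator hΩ hW hΩW hv h0 h1) (fun x => ?_) ?_
    · rw [(hasFDerivAt_indicator hΩ hvd h0 h1 x).fderiv]
      by_cases hx : x ∈ Ω
      · simpa only [indicator_of_mem hx] using hd x hx
      · simpa only [indicator_of_notMem hx] using zero_mem _
    · filter_upwards [isClosed_closure.isOpen_compl.mem_nhds hx₀] with x hx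
      exact indicator_of_notMem (fun hxΩ => hx (subset_closure hxΩ)) v
  exact fun p hp => by simpa only [indicator_of_mem hp] using congrFun hzero p

lemma EnclosedBy.frontier_exterior_eq (henc : EnclosedBy S Ωm Ωp) (hdisj : Disjoint Ωp S)
    (hcl : S ⊆ closure Ωp) : frontier Ωp = S := by
  have hplus : Ωp = (closure Ωm)ᶜ := by
    rw [henc.plus, ← henc.fr, ← closure_eq_self_union_frontier]
  refine Subset.antisymm ?_ fun p hp => ?_
  · rw [hplus, frontier_compl, ← henc.fr]
    exact frontier_closure_subset
  · exact ⟨hcl hp, fun hpi => disjoint_right.1 hdisj hp (interior_subset hpi)⟩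

lemma CVSBase.eqOn_zero_interior (hCVS : CVSBase S Ωm Ωp vm vp) (henc : EnclosedBy S Ωm Ωp)
    (hS : IsSurface 2 S) (h : S ≃ₜ Metric.sphere (0 : E3) 1) : EqOn vm 0 Ωm := by
  obtain ⟨W, hW, hWsub, hvm⟩ := hCVS.smoothm
  obtain rfl := henc.fr
  exact eqOn_zero_of_tangent_of_fderiv_mem_symTraceless henc.openm henc.bounded hS h hW
    (closure_eq_self_union_frontier Ωm ▸ hWsub) hvm hCVS.tangentm
    fun p hp => fderiv_mem_symTraceless (hCVS.curlm p hp) (hCVS.divm p hp)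

/-- Once `vm` vanishes, so does its Jacobian on `S`, and the strain condition becomes
`Dvp vp = 0`. -/
lemma CVSBase.fderiv_exterior_apply_self_eq_zero (hCVS : CVSBase S Ωm Ωp vm vp)
    (hstrain : ∀ p ∈ S, (fderiv ℝ vp p + fderiv ℝ vm p) (vp p - vm p) = 0)
    (hvm0 : EqOn vm 0 Ωm) : ∀ p ∈ S, fderiv ℝ vp p (vp p) = 0 := by
  intro p hp
  obtain ⟨W, hW, hWsub, hvm⟩ := hCVS.smoothm
  have hpW : p ∈ W := hWsub (.inr hp)
  have hfderiv : fderiv ℝ vm p = 0 := fderiv_mem_of_mem_closure hW hvm isClosed_singleton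
    (eqOn_fderiv_zero_of_eqOn_zero hCVS.openm hvm0) (hCVS.clm hp) hpW
  have hval : vm p = 0 := hvm0.of_subset_closure (hvm.continuousOn.mono hWsub)
    continuous_zero.continuousOn subset_union_left
    (union_subset subset_closure hCVS.clm) (.inr hp)
  simpa [hval, hfderiv] using hstrain p hp

lemma CVSBase.eqOn_zero_exterior (hCVS : CVSBase S Ωm Ωp vm vp) (henc : EnclosedBy S Ωm Ωp)
    (hS : IsSurface k S) (hk : k ≠ 0) (hcpt : IsCompact S) (hne : S.Nonempty)
    (hself : ∀ p ∈ S, fderiv ℝ vp p (vp p) = 0) : EqOn vp 0 Ωp := by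
  obtain ⟨W, hW, hWsub, hvp⟩ := hCVS.smoothp
  have hfr := henc.frontier_exterior_eq hCVS.disjp hCVS.clp
  obtain ⟨x, hx⟩ : Ωm.Nonempty := closure_nonempty_iff.1 (hne.mono hCVS.clm)
  have hcl : closure Ωp ≠ univ := (ne_univ_iff_exists_notMem _).2
    ⟨x, disjoint_left.1 (hCVS.disj.closure_right hCVS.openm) hx⟩
  subst hfr
  exact eqOn_zero_of_tangent_of_fderiv_apply_self_of_closure_ne_univ hCVS.openp hcl hS hk hcpt hW
    (closure_eq_self_union_frontier Ωp ▸ hWsub) hvp hCVS.tangentp hself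
    fun p hp => fderiv_mem_symTraceless (hCVS.curlp p hp) (hCVS.divp p hp)

end Exterior

theorem statement3_general (S Ωm Ωp : Set E3) (vm vp : E3 → E3) (hS : IsSurface 2 S)
    (hsphere : Nonempty (S ≃ₜ (Metric.sphere (0 : E3) 1))) (henc : EnclosedBy S Ωm Ωp)
    (hCVS : CVSBase S Ωm Ωp vm vp)
    (hstrain : ∀ p ∈ S, (fderiv ℝ vp p + fderiv ℝ vm p) (vp p - vm p) = 0) :
    (∀ p ∈ Ωm, vm p = 0) ∧ (∀ p ∈ Ωp, vp p = 0) := by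
  obtain ⟨h⟩ := hsphere
  have hvm0 : EqOn vm 0 Ωm := hCVS.eqOn_zero_interior henc hS h
  have hself : ∀ p ∈ S, fderiv ℝ vp p (vp p) = 0 :=
    hCVS.fderiv_exterior_apply_self_eq_zero hstrain hvm0
  exact ⟨hvm0, hCVS.eqOn_zero_exterior henc hS two_ne_zero (isCompact_of_homeomorph_sphere h)
    (nonempty_of_homeomorph_sphere h) hself⟩

/-- Let `S ⊂ ℝ³` be a C² compact closed connected embedded surface
homeomorphic to the 2-sphere, bounding the region `Ωm` with exterior `Ωp`, and let
`(vm, vp)` satisfy the CVS conditions (1)–(5).  Then `vm` vanishes identically on `Ωm`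
and `vp` vanishes identically on `Ωp`. -/
theorem statement3
    (S Ωm Ωp : Set E3) (vm vp : E3 → E3)
    (hS : IsSurface 2 S) (hcpt : IsCompact S) (hconn : IsConnected S)
    (hsphere : Nonempty (S ≃ₜ (Metric.sphere (0 : E3) 1)))
    (henc : EnclosedBy S Ωm Ωp)
    (hCVS : CVSPair S Ωm Ωp vm vp) :
    (∀ p ∈ Ωm, vm p = 0) ∧ (∀ p ∈ Ωp, vp p = 0) := by
  exact statement3_general S Ωm Ωp vm vp hS hsphere henc hCVS.toCVSBase hCVS.strain
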